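/- arXiv:2012.14562 — 2 statements merged into one kernel-verified Lean document; each statement's English description precedes it below -/
import Mathlib

section
/- Let Q be the ground state on ℝ^N and let ρ be the unique radial Schwartz solution of L₊ρ = |x|²Q, where L₊ := −Δ + 1 − (1 + 4/N) Q^{4/N}. Then ∫_{ℝ^N} Q(x) ρ(x) dx = (1/2) ∫_{ℝ^N} |x|² Q(x)² dx, i.e. (Q, ρ)₂ = (1/2)‖|x|Q‖₂². -/
open MeasureTheory Filter Complex

noncomputable section

/-- The Laplacian `Δf = ∑ᵢ ∂ᵢ²f` on `ℝ^N`. -/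
def lapl {N : ℕ} {F : Type*} [NormedAddCommGroup F] [NormedSpace ℝ F]
    (f : EuclideanSpace ℝ (Fin N) → F) (x : EuclideanSpace ℝ (Fin N)) : F :=
  ∑ i : Fin N, fderiv ℝ (fun y => fderiv ℝ f y (EuclideanSpace.single i (1:ℝ))) x
    (EuclideanSpace.single i (1:ℝ))

/-- `|∇f(x)|² = ∑ᵢ |∂ᵢf(x)|²`. -/
def gradSq {N : ℕ} {F : Type*} [NormedAddCommGroup F] [NormedSpace ℝ F]
    (f : EuclideanSpace ℝ (Fin N) → F) (x : EuclideanSpace ℝ (Fin N)) : ℝ :=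
  ∑ i : Fin N, ‖fderiv ℝ f x (EuclideanSpace.single i (1:ℝ))‖ ^ 2

/-- `Q` is the ground state: a smooth, positive, radial solution of
`ΔQ − Q + Q^{1+4/N} = 0` with exponential decay. -/
def IsGroundState (N : ℕ) (Q : EuclideanSpace ℝ (Fin N) → ℝ) : Prop :=
  ContDiff ℝ (⊤ : ℕ∞) Q ∧ (∀ x, 0 < Q x) ∧ (∀ x y, ‖x‖ = ‖y‖ → Q x = Q y) ∧
  (∀ x, lapl Q x - Q x + Q x ^ ((1:ℝ) + 4 / N) = 0) ∧
  ∃ C c : ℝ, 0 < C ∧ 0 < c ∧ ∀ x, Q x ≤ C * Real.exp (-c * ‖x‖)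

/-!
Rescaling shows that `ΛQ = (2 / s) Q + x · ∇Q`, with `s = 4 / N`, satisfies `L₊ΛQ = -2Q`. Since `L₊`
is symmetric, `-2 (Q, ρ) = (L₊ΛQ, ρ) = (ΛQ, L₊ρ) = (ΛQ, |x|²Q)`, and integrating
`x · ∇(|x|²Q²)` by parts gives `(ΛQ, |x|²Q) = (2 / s - (N + 2) / 2) ‖|x|Q‖²`, which is `-‖|x|Q‖²`.

The integrability needed for these steps comes from the two equations and the boundedness of `Q`:
the potential of `L₊` is then bounded, so `|x|²Q = L₊ρ` is rapidly decreasing for Schwartz `ρ`, and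
the identity `|∇Q|² = ½ Δ(Q²) - Q ΔQ`, integrated against cutoffs, bounds `∇Q` in `L²`.
-/

open Topology LineDeriv

section Derivatives

variable {N : ℕ} {F : Type*} [NormedAddCommGroup F] [NormedSpace ℝ F] {n : WithTop ℕ∞}

/-- The partial derivative `∂ᵢf` on `ℝ^N`. -/
def partialDeriv (i : Fin N) (f : EuclideanSpace ℝ (Fin N) → F) (x : EuclideanSpace ℝ (Fin N)) :
    F :=
  fderiv ℝ f x (EuclideanSpace.single i (1 : ℝ))

/-- The derivative `x · ∇f(x)` of `f` along the Euler vector field, the generator of dilations. -/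
def eulerDeriv (f : EuclideanSpace ℝ (Fin N) → F) (x : EuclideanSpace ℝ (Fin N)) : F :=
  fderiv ℝ f x x

theorem lapl_eq_sum_partialDeriv (f : EuclideanSpace ℝ (Fin N) → F)
    (x : EuclideanSpace ℝ (Fin N)) : lapl f x = ∑ i, partialDeriv i (partialDeriv i f) x :=
  rfl

theorem eulerDeriv_eq_sum (f : EuclideanSpace ℝ (Fin N) → F) (x : EuclideanSpace ℝ (Fin N)) :
    eulerDeriv f x = ∑ i, x i • partialDeriv i f x := by
  have hx : x = ∑ i, x i • EuclideanSpace.single i (1 : ℝ) := by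
    simpa using ((EuclideanSpace.basisFun (Fin N) ℝ).sum_repr x).symm
  unfold eulerDeriv partialDeriv
  conv_lhs => rw [hx, map_sum, ← hx]
  simp only [map_smul]

theorem contDiff_partialDeriv (i : Fin N) {f : EuclideanSpace ℝ (Fin N) → F}
    (hf : ContDiff ℝ (n + 1) f) : ContDiff ℝ n (partialDeriv i f) :=
  (hf.fderiv_right le_rfl).clm_apply contDiff_const

theorem contDiff_eulerDeriv {f : EuclideanSpace ℝ (Fin N) → F} (hf : ContDiff ℝ (n + 1) f) :
    ContDiff ℝ n (eulerDeriv f) :=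
  (hf.fderiv_right le_rfl).clm_apply contDiff_id

theorem contDiff_one_partialDeriv (i : Fin N) {f : EuclideanSpace ℝ (Fin N) → F}
    (hf : ContDiff ℝ 2 f) : ContDiff ℝ 1 (partialDeriv i f) :=
  contDiff_partialDeriv i (by rwa [one_add_one_eq_two])

theorem continuous_partialDeriv (i : Fin N) {f : EuclideanSpace ℝ (Fin N) → F}
    (hf : ContDiff ℝ 1 f) : Continuous (partialDeriv i f) :=
  (contDiff_partialDeriv (n := 0) i (by rwa [zero_add])).continuous

theorem continuous_lapl {f : EuclideanSpace ℝ (Fin N) → F} (hf : ContDiff ℝ 2 f) :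
    Continuous (lapl f) :=
  continuous_finsetSum _ fun i _ => continuous_partialDeriv i (contDiff_one_partialDeriv i hf)

theorem partialDeriv_eventuallyEq_zero (i : Fin N) {f : EuclideanSpace ℝ (Fin N) → F} {c : F}
    {x : EuclideanSpace ℝ (Fin N)} (hf : f =ᶠ[𝓝 x] fun _ => c) :
    partialDeriv i f =ᶠ[𝓝 x] fun _ => 0 :=
  (hf.fderiv (𝕜 := ℝ)).mono fun y hy => by simp [partialDeriv, hy]

theorem hasCompactSupport_partialDeriv (i : Fin N) {f : EuclideanSpace ℝ (Fin N) → F}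
    (hf : HasCompactSupport f) : HasCompactSupport (partialDeriv i f) :=
  hf.fderiv_apply ℝ _

theorem hasCompactSupport_lapl {f : EuclideanSpace ℝ (Fin N) → F} (hf : HasCompactSupport f) :
    HasCompactSupport (lapl f) := by
  refine hf.mono' fun x hx => ?_
  obtain ⟨i, -, hi⟩ := Finset.exists_ne_zero_of_sum_ne_zero hx
  exact tsupport_fderiv_apply_subset ℝ _
    (tsupport_fderiv_apply_subset (f := partialDeriv i f) ℝ _ (subset_tsupport _ hi))

theorem partialDeriv_add (i : Fin N) {f g : EuclideanSpace ℝ (Fin N) → F}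
    (hf : Differentiable ℝ f) (hg : Differentiable ℝ g) :
    partialDeriv i (fun x => f x + g x) = fun x => partialDeriv i f x + partialDeriv i g x := by
  funext x
  simp only [partialDeriv, fderiv_fun_add (hf x) (hg x), add_apply]

theorem partialDeriv_const_smul (i : Fin N) (c : ℝ) (f : EuclideanSpace ℝ (Fin N) → F) :
    partialDeriv i (fun x => c • f x) = fun x => c • partialDeriv i f x := by
  funext x
  change fderiv ℝ (c • f) x _ = _
  rw [fderiv_const_smul_field]
  rfl

theorem partialDeriv_comp_smul (i : Fin N) (c : ℝ) (f : EuclideanSpace ℝ (Fin N) → F) :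
    partialDeriv i (fun x => f (c • x)) = fun x => c • partialDeriv i f (c • x) := by
  funext x
  simp only [partialDeriv, fderiv_comp_smul, smul_apply]

theorem partialDeriv_mul (i : Fin N) {f g : EuclideanSpace ℝ (Fin N) → ℝ}
    (hf : Differentiable ℝ f) (hg : Differentiable ℝ g) :
    partialDeriv i (fun x => f x * g x) =
      fun x => f x * partialDeriv i g x + partialDeriv i f x * g x := by
  funext x
  simp only [partialDeriv, fderiv_fun_mul (hf x) (hg x), add_apply,
    smul_apply, smul_eq_mul, mul_comm (g x)]

theorem partialDeriv_coord (i : Fin N) (x : EuclideanSpace ℝ (Fin N)) :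
    partialDeriv i (fun y => y i) x = 1 := by
  have h : HasFDerivAt (fun y : EuclideanSpace ℝ (Fin N) => y i)
      (EuclideanSpace.proj (𝕜 := ℝ) i) x := (EuclideanSpace.proj (𝕜 := ℝ) i).hasFDerivAt
  simp [partialDeriv, h.fderiv]

theorem lapl_add {f g : EuclideanSpace ℝ (Fin N) → F} (hf : ContDiff ℝ 2 f)
    (hg : ContDiff ℝ 2 g) (x : EuclideanSpace ℝ (Fin N)) :
    lapl (fun x => f x + g x) x = lapl f x + lapl g x := by
  simp only [lapl_eq_sum_partialDeriv, ← Finset.sum_add_distrib]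
  refine Finset.sum_congr rfl fun i _ => ?_
  rw [partialDeriv_add i (hf.differentiable two_ne_zero) (hg.differentiable two_ne_zero),
    partialDeriv_add i ((contDiff_one_partialDeriv i hf).differentiable one_ne_zero)
      ((contDiff_one_partialDeriv i hg).differentiable one_ne_zero)]

theorem lapl_const_smul (c : ℝ) (f : EuclideanSpace ℝ (Fin N) → F)
    (x : EuclideanSpace ℝ (Fin N)) : lapl (fun x => c • f x) x = c • lapl f x := by
  simp only [lapl_eq_sum_partialDeriv, partialDeriv_const_smul, Finset.smul_sum]

theorem lapl_comp_smul (c : ℝ) (f : EuclideanSpace ℝ (Fin N) → F)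
    (x : EuclideanSpace ℝ (Fin N)) : lapl (fun x => f (c • x)) x = c ^ 2 • lapl f (c • x) := by
  simp only [lapl_eq_sum_partialDeriv, partialDeriv_comp_smul, partialDeriv_const_smul,
    Finset.smul_sum, smul_smul, pow_two]

theorem lapl_mul {f g : EuclideanSpace ℝ (Fin N) → ℝ} (hf : ContDiff ℝ 2 f)
    (hg : ContDiff ℝ 2 g) (x : EuclideanSpace ℝ (Fin N)) :
    lapl (fun x => f x * g x) x =
      f x * lapl g x + 2 * ∑ i, partialDeriv i f x * partialDeriv i g x + lapl f x * g x := by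
  have hf1 := hf.differentiable two_ne_zero
  have hg1 := hg.differentiable two_ne_zero
  have hf2 := fun i => (contDiff_one_partialDeriv i hf).differentiable one_ne_zero
  have hg2 := fun i => (contDiff_one_partialDeriv i hg).differentiable one_ne_zero
  simp only [lapl_eq_sum_partialDeriv, Finset.mul_sum, Finset.sum_mul, ← Finset.sum_add_distrib]
  refine Finset.sum_congr rfl fun i _ => ?_
  rw [partialDeriv_mul i hf1 hg1, partialDeriv_add i (hf1.fun_mul (hg2 i)) ((hf2 i).fun_mul hg1),
    partialDeriv_mul i hf1 (hg2 i), partialDeriv_mul i (hf2 i) hg1]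
  ring

theorem partialDeriv_eulerDeriv (i : Fin N) {f : EuclideanSpace ℝ (Fin N) → F}
    (hf : ContDiff ℝ 2 f) :
    partialDeriv i (eulerDeriv f) =
      fun x => eulerDeriv (partialDeriv i f) x + partialDeriv i f x := by
  funext x
  have hf' : DifferentiableAt ℝ (fderiv ℝ f) x :=
    (hf.fderiv_right (m := 1) (by rw [one_add_one_eq_two])).differentiable one_ne_zero x
  have hsymm : IsSymmSndFDerivAt ℝ f x :=
    hf.contDiffAt.isSymmSndFDerivAt (by rw [minSmoothness_of_isRCLikeNormedField])
  unfold eulerDeriv partialDeriv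
  rw [fderiv_clm_apply hf' differentiableAt_fun_id, fderiv_clm_apply hf' (differentiableAt_const _)]
  simp [hsymm.eq x, add_comm]

theorem lapl_eulerDeriv {f : EuclideanSpace ℝ (Fin N) → F} (hf : ContDiff ℝ 3 f)
    (x : EuclideanSpace ℝ (Fin N)) :
    lapl (eulerDeriv f) x = eulerDeriv (lapl f) x + (2 : ℝ) • lapl f x := by
  have hf2 : ContDiff ℝ (2 + 1) f := by rwa [two_add_one_eq_three]
  have hdf : ∀ i, ContDiff ℝ 2 (partialDeriv i f) := fun i => contDiff_partialDeriv i hf2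
  have hsum : eulerDeriv (lapl f) x = ∑ i, eulerDeriv (partialDeriv i (partialDeriv i f)) x := by
    simp only [eulerDeriv, funext (lapl_eq_sum_partialDeriv f)]
    rw [fderiv_fun_sum fun i _ =>
      (contDiff_one_partialDeriv i (hdf i)).differentiable one_ne_zero x]
    simp only [sum_apply]
  rw [hsum, lapl_eq_sum_partialDeriv, lapl_eq_sum_partialDeriv, Finset.smul_sum,
    ← Finset.sum_add_distrib]
  refine Finset.sum_congr rfl fun i _ => ?_
  have hE : ContDiff ℝ 1 (eulerDeriv (partialDeriv i f)) :=
    contDiff_eulerDeriv (by rw [one_add_one_eq_two]; exact hdf i)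
  rw [partialDeriv_eulerDeriv i (hf2.of_le le_self_add),
    partialDeriv_add i (hE.differentiable one_ne_zero) ((hdf i).differentiable two_ne_zero),
    partialDeriv_eulerDeriv i (hdf i)]
  simp only [two_smul, add_assoc]

end Derivatives

section Cutoff

variable {N : ℕ}

/-- A smooth bump function on `ℝ^N`, equal to `1` on the unit ball and supported in the ball of
radius `2`. -/
def unitBump (N : ℕ) : ContDiffBump (0 : EuclideanSpace ℝ (Fin N)) :=
  ⟨1, 2, one_pos, one_lt_two⟩

/-- The smooth cutoff at scale `n + 1` used to localize integrals over `ℝ^N`. -/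
def cutoff (N n : ℕ) (x : EuclideanSpace ℝ (Fin N)) : ℝ :=
  unitBump N (((n : ℝ) + 1)⁻¹ • x)

theorem contDiff_cutoff (n : ℕ) : ContDiff ℝ 2 (cutoff N n) :=
  (unitBump N).contDiff.comp (contDiff_id.const_smul _)

theorem hasCompactSupport_cutoff (n : ℕ) : HasCompactSupport (cutoff N n) :=
  (unitBump N).hasCompactSupport.comp_smul (inv_ne_zero n.cast_add_one_ne_zero)

theorem cutoff_nonneg (n : ℕ) (x : EuclideanSpace ℝ (Fin N)) : 0 ≤ cutoff N n x :=
  (unitBump N).nonneg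

theorem abs_cutoff_le_one (n : ℕ) (x : EuclideanSpace ℝ (Fin N)) : |cutoff N n x| ≤ 1 := by
  rw [abs_of_nonneg (cutoff_nonneg n x)]
  exact (unitBump N).le_one

theorem eventually_cutoff_eventuallyEq_one (x : EuclideanSpace ℝ (Fin N)) :
    ∀ᶠ n in atTop, cutoff N n =ᶠ[𝓝 x] fun _ => 1 := by
  have hlim : Tendsto (fun n : ℕ => ((n : ℝ) + 1)⁻¹ • x) atTop (𝓝 0) := by
    simpa using (tendsto_one_div_add_atTop_nhds_zero_nat (𝕜 := ℝ)).smul_const x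
  filter_upwards [hlim.eventually (Metric.ball_mem_nhds 0 one_pos)] with n hn
  have hcont : Continuous fun y : EuclideanSpace ℝ (Fin N) => ((n : ℝ) + 1)⁻¹ • y :=
    continuous_const_smul _
  filter_upwards [hcont.continuousAt.preimage_mem_nhds (Metric.isOpen_ball.mem_nhds hn)] with y hy
  exact (unitBump N).one_of_mem_closedBall (Metric.ball_subset_closedBall hy)

theorem exists_abs_partialDeriv_cutoff_le (i : Fin N) :
    ∃ K, ∀ n x, |partialDeriv i (cutoff N n) x| ≤ K := by
  obtain ⟨K, hK⟩ := (hasCompactSupport_partialDeriv i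
    (unitBump N).hasCompactSupport).exists_bound_of_continuous
      (continuous_partialDeriv i (unitBump N).contDiff)
  refine ⟨K, fun n x => ?_⟩
  unfold cutoff
  rw [partialDeriv_comp_smul]
  beta_reduce
  rw [smul_eq_mul, abs_mul, abs_of_nonneg (by positivity)]
  exact (mul_le_of_le_one_left (abs_nonneg _) (inv_le_one_of_one_le₀ (by simp))).trans (hK _)

theorem exists_abs_lapl_cutoff_le : ∃ K, ∀ n x, |lapl (cutoff N n) x| ≤ K := by
  obtain ⟨K, hK⟩ := (hasCompactSupport_lapl
    (unitBump N).hasCompactSupport).exists_bound_of_continuous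
      (continuous_lapl (unitBump N).contDiff)
  refine ⟨K, fun n x => ?_⟩
  unfold cutoff
  rw [lapl_comp_smul, smul_eq_mul, abs_mul, abs_of_nonneg (by positivity)]
  exact (mul_le_of_le_one_left (abs_nonneg _)
    (pow_le_one₀ (by positivity) (inv_le_one_of_one_le₀ (by simp)))).trans (hK _)

theorem tendsto_integral_mul_of_bounded {α : Type*} [MeasurableSpace α] {μ : Measure α}
    {ψ : ℕ → α → ℝ} {h : α → ℝ} {c K : ℝ} (hψ : ∀ n, AEStronglyMeasurable (ψ n) μ)
    (hK : ∀ n x, |ψ n x| ≤ K) (hlim : ∀ x, Tendsto (fun n => ψ n x) atTop (𝓝 c))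
    (hh : Integrable h μ) :
    Tendsto (fun n => ∫ x, ψ n x * h x ∂μ) atTop (𝓝 (c * ∫ x, h x ∂μ)) := by
  rw [← integral_const_mul]
  refine tendsto_integral_of_dominated_convergence (fun x => K * ‖h x‖)
    (fun n => (hψ n).mul hh.aestronglyMeasurable) (hh.norm.const_mul K)
    (fun n => ae_of_all _ fun x => ?_) (ae_of_all _ fun x => (hlim x).mul_const _)
  rw [norm_mul]
  exact mul_le_mul_of_nonneg_right (hK n x) (norm_nonneg _)

variable {h : EuclideanSpace ℝ (Fin N) → ℝ}

theorem tendsto_integral_cutoff_mul (hh : Integrable h) :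
    Tendsto (fun n => ∫ x, cutoff N n x * h x) atTop (𝓝 (∫ x, h x)) := by
  simpa only [one_mul] using tendsto_integral_mul_of_bounded
    (fun n => (contDiff_cutoff n).continuous.aestronglyMeasurable) abs_cutoff_le_one
    (fun x => tendsto_const_nhds.congr' ((eventually_cutoff_eventuallyEq_one x).mono
      fun _ hn => hn.eq_of_nhds.symm)) hh

theorem tendsto_integral_partialDeriv_cutoff_mul (i : Fin N) (hh : Integrable h) :
    Tendsto (fun n => ∫ x, partialDeriv i (cutoff N n) x * h x) atTop (𝓝 0) := by
  obtain ⟨K, hK⟩ := exists_abs_partialDeriv_cutoff_le i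
  simpa only [zero_mul] using tendsto_integral_mul_of_bounded
    (fun n => (continuous_partialDeriv i
      ((contDiff_cutoff n).of_le one_le_two)).aestronglyMeasurable) hK
    (fun x => tendsto_const_nhds.congr' ((eventually_cutoff_eventuallyEq_one x).mono
      fun _ hn => (partialDeriv_eventuallyEq_zero i hn).eq_of_nhds.symm)) hh

theorem tendsto_integral_lapl_cutoff_mul (hh : Integrable h) :
    Tendsto (fun n => ∫ x, lapl (cutoff N n) x * h x) atTop (𝓝 0) := by
  obtain ⟨K, hK⟩ := exists_abs_lapl_cutoff_le (N := N)
  simpa only [zero_mul] using tendsto_integral_mul_of_bounded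
    (fun n => (continuous_lapl (contDiff_cutoff n)).aestronglyMeasurable) hK
    (fun x => tendsto_const_nhds.congr' ((eventually_cutoff_eventuallyEq_one x).mono
      fun _ hn => (Finset.sum_eq_zero fun i _ => (partialDeriv_eventuallyEq_zero i
        (partialDeriv_eventuallyEq_zero i hn)).eq_of_nhds).symm)) hh

end Cutoff

section Green

variable {N : ℕ} {f g : EuclideanSpace ℝ (Fin N) → ℝ}

theorem integrable_mul_of_hasCompactSupport (hf : Continuous f) (hfs : HasCompactSupport f)
    (hg : Continuous g) : Integrable fun x => f x * g x :=
  (hf.mul hg).integrable_of_hasCompactSupport hfs.mul_right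

theorem integral_mul_partialDeriv_of_hasCompactSupport (i : Fin N) (hf : ContDiff ℝ 1 f)
    (hg : ContDiff ℝ 1 g) (hgs : HasCompactSupport g) :
    ∫ x, f x * partialDeriv i g x = -∫ x, partialDeriv i f x * g x := by
  refine integral_mul_fderiv_eq_neg_fderiv_mul_of_integrable ?_ ?_ ?_
    (fun x _ => hf.differentiable one_ne_zero x) (fun x _ => hg.differentiable one_ne_zero x)
  · exact ((continuous_partialDeriv i hf).mul hg.continuous).integrable_of_hasCompactSupport
      hgs.mul_left
  · exact (hf.continuous.mul (continuous_partialDeriv i hg)).integrable_of_hasCompactSupport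
      (hasCompactSupport_partialDeriv i hgs).mul_left
  · exact (hf.continuous.mul hg.continuous).integrable_of_hasCompactSupport hgs.mul_left

theorem integral_lapl_mul_of_hasCompactSupport (hf : ContDiff ℝ 2 f) (hg : ContDiff ℝ 2 g)
    (hgs : HasCompactSupport g) : ∫ x, lapl f x * g x = ∫ x, f x * lapl g x := by
  have hf' := fun i => contDiff_one_partialDeriv i hf
  have hg' := fun i => contDiff_one_partialDeriv i hg
  have hgs' := fun i => hasCompactSupport_partialDeriv i hgs
  simp only [lapl_eq_sum_partialDeriv, Finset.sum_mul, Finset.mul_sum]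
  rw [integral_finsetSum, integral_finsetSum]
  · refine Finset.sum_congr rfl fun i _ => ?_
    rw [integral_mul_partialDeriv_of_hasCompactSupport i (hf.of_le one_le_two) (hg' i) (hgs' i),
      integral_mul_partialDeriv_of_hasCompactSupport i (hf' i) (hg.of_le one_le_two) hgs, neg_neg]
  · exact fun i _ => (hf.continuous.mul (continuous_partialDeriv i (hg' i))
      ).integrable_of_hasCompactSupport (hasCompactSupport_partialDeriv i (hgs' i)).mul_left
  · exact fun i _ => ((continuous_partialDeriv i (hf' i)).mul hg.continuous
      ).integrable_of_hasCompactSupport hgs.mul_left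

theorem integral_mul_lapl_cutoff_mul (hf : Continuous f) (hg : ContDiff ℝ 2 g) (n : ℕ) :
    ∫ x, f x * lapl (fun y => cutoff N n y * g y) x =
      (∫ x, cutoff N n x * (f x * lapl g x)) +
        2 * (∑ i, ∫ x, partialDeriv i (cutoff N n) x * (f x * partialDeriv i g x)) +
        ∫ x, lapl (cutoff N n) x * (f x * g x) := by
  have hχ := contDiff_cutoff (N := N) n
  have hχs := hasCompactSupport_cutoff (N := N) n
  have hint₁ := integrable_mul_of_hasCompactSupport hχ.continuous hχs
    (hf.fun_mul (continuous_lapl hg))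
  have hint₂ := fun i => integrable_mul_of_hasCompactSupport
    (continuous_partialDeriv i (hχ.of_le one_le_two)) (hasCompactSupport_partialDeriv i hχs)
    (hf.fun_mul (continuous_partialDeriv i (hg.of_le one_le_two)))
  have hint₃ := integrable_mul_of_hasCompactSupport (continuous_lapl hχ)
    (hasCompactSupport_lapl hχs) (hf.fun_mul hg.continuous)
  rw [← integral_finsetSum _ fun i _ => hint₂ i, ← integral_const_mul, ← integral_add hint₁
    ((integrable_finsetSum _ fun i _ => hint₂ i).const_mul 2), ← integral_add
    (hint₁.fun_add ((integrable_finsetSum _ fun i _ => hint₂ i).const_mul 2)) hint₃]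
  refine integral_congr_ae (ae_of_all _ fun x => ?_)
  simp only [lapl_mul hχ hg, Finset.mul_sum, mul_add]
  refine congrArg₂ _ (congrArg₂ _ (by ring) (Finset.sum_congr rfl fun i _ => by ring)) (by ring)

theorem integral_lapl_mul (hf : ContDiff ℝ 2 f) (hg : ContDiff ℝ 2 g)
    (hfg : Integrable fun x => f x * g x)
    (hfdg : ∀ i, Integrable fun x => f x * partialDeriv i g x)
    (hlfg : Integrable fun x => lapl f x * g x) (hflg : Integrable fun x => f x * lapl g x) :
    ∫ x, lapl f x * g x = ∫ x, f x * lapl g x := by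
  have hcutoff (n : ℕ) : ∫ x, cutoff N n x * (lapl f x * g x) =
      (∫ x, cutoff N n x * (f x * lapl g x)) +
        2 * (∑ i, ∫ x, partialDeriv i (cutoff N n) x * (f x * partialDeriv i g x)) +
        ∫ x, lapl (cutoff N n) x * (f x * g x) := by
    rw [← integral_mul_lapl_cutoff_mul hf.continuous hg, ← integral_lapl_mul_of_hasCompactSupport hf
      ((contDiff_cutoff n).mul hg) (hasCompactSupport_cutoff n).mul_right]
    simp only [mul_left_comm]
  refine tendsto_nhds_unique (tendsto_integral_cutoff_mul hlfg) ?_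
  simp only [hcutoff]
  simpa only [Finset.sum_const_zero, mul_zero, add_zero] using
    ((tendsto_integral_cutoff_mul hflg).add ((tendsto_finsetSum _ fun i _ =>
      tendsto_integral_partialDeriv_cutoff_mul i (hfdg i)).const_mul 2)).add
      (tendsto_integral_lapl_cutoff_mul hfg)

theorem integrable_of_tendsto_integral {α : Type*} [MeasurableSpace α] {μ : Measure α}
    {F : ℕ → α → ℝ} {f : α → ℝ} {a : ℝ} (hF : ∀ n, Integrable (F n) μ)
    (hF_nonneg : ∀ n x, 0 ≤ F n x) (hlim : ∀ x, Tendsto (fun n => F n x) atTop (𝓝 (f x)))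
    (ha : Tendsto (fun n => ∫ x, F n x ∂μ) atTop (𝓝 a)) : Integrable f μ := by
  refine ⟨aestronglyMeasurable_of_tendsto_ae _ (fun n => (hF n).aestronglyMeasurable)
    (ae_of_all _ hlim), ?_⟩
  have hlintegral (n : ℕ) : ∫⁻ x, ‖F n x‖ₑ ∂μ = ENNReal.ofReal (∫ x, F n x ∂μ) := by
    rw [ofReal_integral_eq_lintegral_ofReal (hF n) (ae_of_all _ (hF_nonneg n))]
    simp only [Real.enorm_of_nonneg (hF_nonneg n _)]
  calc ∫⁻ x, ‖f x‖ₑ ∂μ = ∫⁻ x, liminf (fun n => ‖F n x‖ₑ) atTop ∂μ :=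
      lintegral_congr fun x => (hlim x).enorm.liminf_eq.symm
    _ ≤ liminf (fun n => ∫⁻ x, ‖F n x‖ₑ ∂μ) atTop :=
      lintegral_liminf_le' fun n => (hF n).aestronglyMeasurable.enorm
    _ = ENNReal.ofReal a := by simp only [hlintegral, (ENNReal.tendsto_ofReal ha).liminf_eq]
    _ < ⊤ := ENNReal.ofReal_lt_top

theorem integral_cutoff_mul_gradSq (hf : ContDiff ℝ 2 f) (n : ℕ) :
    ∫ x, cutoff N n x * gradSq f x =
      2⁻¹ * (∫ x, lapl (cutoff N n) x * f x ^ 2) - ∫ x, cutoff N n x * (f x * lapl f x) := by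
  have hχ := contDiff_cutoff (N := N) n
  have hχs := hasCompactSupport_cutoff (N := N) n
  have hlapl_sq (x : EuclideanSpace ℝ (Fin N)) :
      gradSq f x = 2⁻¹ * lapl (fun y => f y * f y) x - f x * lapl f x := by
    rw [lapl_mul hf hf]
    simp only [gradSq, partialDeriv, Real.norm_eq_abs, sq_abs, ← pow_two]
    ring
  have hmove : ∫ x, cutoff N n x * lapl (fun y => f y * f y) x =
      ∫ x, lapl (cutoff N n) x * f x ^ 2 := by
    simp only [mul_comm (cutoff N n _), mul_comm (lapl (cutoff N n) _), pow_two]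
    exact integral_lapl_mul_of_hasCompactSupport (hf.mul hf) hχ hχs
  rw [← hmove, ← integral_const_mul, ← integral_sub
    ((integrable_mul_of_hasCompactSupport hχ.continuous hχs
      (continuous_lapl (hf.mul hf))).const_mul 2⁻¹)
    (integrable_mul_of_hasCompactSupport hχ.continuous hχs
      (hf.continuous.fun_mul (continuous_lapl hf)))]
  simp only [hlapl_sq, mul_sub, mul_left_comm]

theorem integrable_gradSq (hf : ContDiff ℝ 2 f) (hf2 : Integrable fun x => f x ^ 2)
    (hflf : Integrable fun x => f x * lapl f x) : Integrable (gradSq f) := by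
  have hgrad : Continuous (gradSq f) := continuous_finsetSum _ fun i _ =>
    (continuous_partialDeriv i (hf.of_le one_le_two)).norm.pow 2
  refine integrable_of_tendsto_integral (F := fun n x => cutoff N n x * gradSq f x)
    (fun n => integrable_mul_of_hasCompactSupport (contDiff_cutoff n).continuous
      (hasCompactSupport_cutoff n) hgrad)
    (fun n x => mul_nonneg (cutoff_nonneg n x) (Finset.sum_nonneg fun i _ => by positivity))
    (fun x => tendsto_const_nhds.congr' ((eventually_cutoff_eventuallyEq_one x).mono
      fun n hn => by simp only [hn.eq_of_nhds, one_mul])) ?_ (a := 2⁻¹ * 0 - ∫ x, f x * lapl f x)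
  simp only [integral_cutoff_mul_gradSq hf]
  exact ((tendsto_integral_lapl_cutoff_mul hf2).const_mul _).sub (tendsto_integral_cutoff_mul hflf)

theorem memLp_two_partialDeriv (i : Fin N) (hf : ContDiff ℝ 1 f) (hgrad : Integrable (gradSq f)) :
    MemLp (partialDeriv i f) 2 := by
  have hcont := continuous_partialDeriv i hf
  rw [memLp_two_iff_integrable_sq hcont.aestronglyMeasurable]
  refine hgrad.mono' (hcont.pow 2).aestronglyMeasurable (ae_of_all _ fun x => ?_)
  rw [norm_pow]
  exact Finset.single_le_sum (f := fun i => ‖partialDeriv i f x‖ ^ 2)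
    (fun j _ => by positivity) (Finset.mem_univ i)

end Green

section RapidDecay

/-- A function decreasing faster than every power of `‖x‖`, with no condition on derivatives. -/
def IsRapidlyDecreasing {E F : Type*} [NormedAddCommGroup E] [NormedAddCommGroup F]
    (f : E → F) : Prop :=
  ∀ k : ℕ, ∃ C, ∀ x, ‖x‖ ^ k * ‖f x‖ ≤ C

namespace IsRapidlyDecreasing

section NormedGroup

variable {E F : Type*} [NormedAddCommGroup E] [NormedAddCommGroup F] {f g : E → F}

theorem add (hf : IsRapidlyDecreasing f) (hg : IsRapidlyDecreasing g) :
    IsRapidlyDecreasing fun x => f x + g x := by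
  intro k
  obtain ⟨C, hC⟩ := hf k
  obtain ⟨D, hD⟩ := hg k
  refine ⟨C + D, fun x => ?_⟩
  calc ‖x‖ ^ k * ‖f x + g x‖ ≤ ‖x‖ ^ k * (‖f x‖ + ‖g x‖) := by gcongr; exact norm_add_le _ _
    _ = ‖x‖ ^ k * ‖f x‖ + ‖x‖ ^ k * ‖g x‖ := mul_add _ _ _
    _ ≤ C + D := add_le_add (hC x) (hD x)

theorem mul_of_norm_le {a f : E → ℝ} {B : ℝ} {m : ℕ} (hf : IsRapidlyDecreasing f)
    (ha : ∀ x, ‖a x‖ ≤ B * ‖x‖ ^ m) : IsRapidlyDecreasing fun x => a x * f x := by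
  intro k
  obtain ⟨C, hC⟩ := hf (k + m)
  refine ⟨|B| * C, fun x => ?_⟩
  calc ‖x‖ ^ k * ‖a x * f x‖ ≤ ‖x‖ ^ k * (|B| * ‖x‖ ^ m * ‖f x‖) := by
        rw [norm_mul]
        gcongr
        exact (ha x).trans (by gcongr; exact le_abs_self B)
    _ = |B| * (‖x‖ ^ (k + m) * ‖f x‖) := by ring
    _ ≤ |B| * C := by gcongr; exact hC x

theorem bdd_mul {a f : E → ℝ} {B : ℝ} (hf : IsRapidlyDecreasing f) (ha : ∀ x, ‖a x‖ ≤ B) :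
    IsRapidlyDecreasing fun x => a x * f x :=
  hf.mul_of_norm_le (m := 0) fun x => by simpa only [pow_zero, mul_one] using ha x

theorem exists_norm_le (hf : IsRapidlyDecreasing f) : ∃ B, ∀ x, ‖f x‖ ≤ B := by
  simpa only [pow_zero, one_mul] using hf 0

theorem mul {f g : E → ℝ} (hf : IsRapidlyDecreasing f) (hg : IsRapidlyDecreasing g) :
    IsRapidlyDecreasing fun x => f x * g x :=
  hg.bdd_mul hf.exists_norm_le.choose_spec

theorem of_norm_sq_mul {f : E → ℝ} {B : ℝ} (hf : IsRapidlyDecreasing fun x => ‖x‖ ^ 2 * f x)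
    (hB : ∀ x, ‖f x‖ ≤ B) : IsRapidlyDecreasing f := by
  intro k
  obtain ⟨C, hC⟩ := hf k
  refine ⟨B + C, fun x => ?_⟩
  have hpow : ‖x‖ ^ k ≤ 1 + ‖x‖ ^ k * ‖x‖ ^ 2 := by
    rcases le_total ‖x‖ 1 with hx | hx
    · exact (pow_le_one₀ (norm_nonneg x) hx).trans (le_add_of_nonneg_right (by positivity))
    · exact (le_mul_of_one_le_right (by positivity) (one_le_pow₀ hx)).trans
        (le_add_of_nonneg_left zero_le_one)
  calc ‖x‖ ^ k * ‖f x‖ ≤ (1 + ‖x‖ ^ k * ‖x‖ ^ 2) * ‖f x‖ := by gcongr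
    _ = ‖f x‖ + ‖x‖ ^ k * ‖‖x‖ ^ 2 * f x‖ := by rw [norm_mul, norm_pow, norm_norm]; ring
    _ ≤ B + C := add_le_add (hB x) (hC x)

end NormedGroup

section Integral

variable {E : Type*} [NormedAddCommGroup E] [MeasurableSpace E] [BorelSpace E]
  [SecondCountableTopology E] {μ : Measure E} [μ.HasTemperateGrowth] {f : E → ℝ}

theorem integrable (hf : IsRapidlyDecreasing f) (hfm : AEStronglyMeasurable f μ) :
    Integrable f μ := by
  obtain ⟨B, hB⟩ := hf.exists_norm_le
  obtain ⟨C, hC⟩ := hf (0 + μ.integrablePower)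
  simpa only [pow_zero, one_mul, integrable_norm_iff hfm] using
    integrable_of_le_of_pow_mul_le hB hC hfm

theorem memLp_two (hf : IsRapidlyDecreasing f) (hfm : AEStronglyMeasurable f μ) :
    MemLp f 2 μ := by
  simpa only [memLp_two_iff_integrable_sq hfm, pow_two] using (hf.mul hf).integrable (hfm.mul hfm)

end Integral

variable {N : ℕ}

theorem coord_mul {f : EuclideanSpace ℝ (Fin N) → ℝ} (hf : IsRapidlyDecreasing f) (i : Fin N) :
    IsRapidlyDecreasing fun x => x i * f x :=
  hf.mul_of_norm_le (B := 1) (m := 1) fun x => by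
    simpa only [pow_one, one_mul] using PiLp.norm_apply_le x i

theorem norm_sq_mul {E : Type*} [NormedAddCommGroup E] {f : E → ℝ} (hf : IsRapidlyDecreasing f) :
    IsRapidlyDecreasing fun x => ‖x‖ ^ 2 * f x :=
  hf.mul_of_norm_le (B := 1) (m := 2) fun x => by simp

end IsRapidlyDecreasing

theorem isRapidlyDecreasing_schwartzMap {E F : Type*} [NormedAddCommGroup E] [NormedSpace ℝ E]
    [NormedAddCommGroup F] [NormedSpace ℝ F] (φ : SchwartzMap E F) : IsRapidlyDecreasing φ :=
  fun k => ⟨_, fun x => φ.norm_pow_mul_le_seminorm ℝ k x⟩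

variable {N : ℕ} {F : Type*} [NormedAddCommGroup F] [NormedSpace ℝ F]

theorem isRapidlyDecreasing_partialDeriv_schwartzMap (i : Fin N)
    (φ : SchwartzMap (EuclideanSpace ℝ (Fin N)) F) : IsRapidlyDecreasing (partialDeriv i φ) :=
  isRapidlyDecreasing_schwartzMap (∂_{EuclideanSpace.single i (1 : ℝ)} φ)

theorem isRapidlyDecreasing_neg_lapl_schwartzMap (φ : SchwartzMap (EuclideanSpace ℝ (Fin N)) F) :
    IsRapidlyDecreasing fun x => -lapl φ x := by
  have hlapl (x : EuclideanSpace ℝ (Fin N)) : -lapl φ x =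
      (-∑ i : Fin N, ∂_{EuclideanSpace.single i (1 : ℝ)} (∂_{EuclideanSpace.single i (1 : ℝ)} φ) :
        SchwartzMap (EuclideanSpace ℝ (Fin N)) F) x := by
    rw [neg_apply, sum_apply]
    rfl
  simpa only [hlapl] using isRapidlyDecreasing_schwartzMap _

end RapidDecay

section Virial

variable {N : ℕ}

theorem integral_eulerDeriv {w : EuclideanSpace ℝ (Fin N) → ℝ} (hw : Differentiable ℝ w)
    (hwi : Integrable w) (hxw : ∀ i, Integrable fun x => x i * w x)
    (hxdw : ∀ i, Integrable fun x => x i * partialDeriv i w x) :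
    ∫ x, eulerDeriv w x = -(N * ∫ x, w x) := by
  have hibp (i : Fin N) : ∫ x, x i * partialDeriv i w x = -∫ x, w x := by
    have hcoord : Differentiable ℝ fun x : EuclideanSpace ℝ (Fin N) => x i :=
      (EuclideanSpace.proj (𝕜 := ℝ) i).differentiable
    have hone (x : EuclideanSpace ℝ (Fin N)) :
        fderiv ℝ (fun y : EuclideanSpace ℝ (Fin N) => y i) x (EuclideanSpace.single i 1) = 1 :=
      partialDeriv_coord i x
    refine (integral_mul_fderiv_eq_neg_fderiv_mul_of_integrable (𝕜 := ℝ)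
      (v := EuclideanSpace.single i (1 : ℝ)) (by simpa only [hone, one_mul] using hwi) (hxdw i)
      (hxw i) (fun x _ => hcoord x) (fun x _ => hw x)).trans ?_
    simp only [hone, one_mul]
  simp only [eulerDeriv_eq_sum, smul_eq_mul]
  rw [integral_finsetSum _ fun i _ => hxdw i]
  simp [hibp]

variable {f h : EuclideanSpace ℝ (Fin N) → ℝ}

theorem integrable_eulerDeriv_mul (hdf : ∀ i, MemLp (partialDeriv i f) 2)
    (hh : IsRapidlyDecreasing h) (hhm : AEStronglyMeasurable h) :
    Integrable fun x => eulerDeriv f x * h x := by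
  simp only [eulerDeriv_eq_sum, smul_eq_mul, Finset.sum_mul]
  refine integrable_finsetSum _ fun i _ => ?_
  have hcoord : AEStronglyMeasurable fun x : EuclideanSpace ℝ (Fin N) => x i :=
    (EuclideanSpace.proj (𝕜 := ℝ) i).continuous.aestronglyMeasurable
  refine ((hdf i).integrable_mul ((hh.coord_mul i).memLp_two (hcoord.mul hhm))).congr
    (ae_of_all _ fun x => ?_)
  simp only [Pi.mul_apply]
  ring

theorem partialDeriv_norm_sq_mul_sq (i : Fin N) (hf : Differentiable ℝ f)
    (x : EuclideanSpace ℝ (Fin N)) :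
    partialDeriv i (fun y => ‖y‖ ^ 2 * (f y * f y)) x =
      2 * (x i * (f x * f x)) + 2 * (‖x‖ ^ 2 * f x * partialDeriv i f x) := by
  have hnorm : partialDeriv i (fun y : EuclideanSpace ℝ (Fin N) => ‖y‖ ^ 2) x = 2 * x i := by
    simp [partialDeriv, fderiv_norm_sq_apply, EuclideanSpace.inner_single_right]
  rw [partialDeriv_mul i ((contDiff_norm_sq ℝ).differentiable one_ne_zero) (hf.fun_mul hf),
    partialDeriv_mul i hf hf]
  beta_reduce
  rw [hnorm]
  ring

theorem eulerDeriv_norm_sq_mul_sq (hf : Differentiable ℝ f) (x : EuclideanSpace ℝ (Fin N)) :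
    eulerDeriv (fun y => ‖y‖ ^ 2 * (f y * f y)) x =
      2 * (‖x‖ ^ 2 * (f x * f x)) + 2 * (eulerDeriv f x * (‖x‖ ^ 2 * f x)) := by
  calc eulerDeriv (fun y => ‖y‖ ^ 2 * (f y * f y)) x =
      2 * ((∑ i, x i ^ 2) * (f x * f x)) +
        2 * ((∑ i, x i * partialDeriv i f x) * (‖x‖ ^ 2 * f x)) := by
        simp only [eulerDeriv_eq_sum, partialDeriv_norm_sq_mul_sq _ hf, smul_eq_mul,
          Finset.sum_mul, Finset.mul_sum, ← Finset.sum_add_distrib]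
        exact Finset.sum_congr rfl fun i _ => by ring
    _ = _ := by simp only [← EuclideanSpace.real_norm_sq_eq, eulerDeriv_eq_sum, smul_eq_mul]

theorem integral_eulerDeriv_mul_norm_sq_mul (hf : ContDiff ℝ 1 f)
    (hfr : IsRapidlyDecreasing f) (hdf : ∀ i, MemLp (partialDeriv i f) 2) :
    ∫ x, eulerDeriv f x * (‖x‖ ^ 2 * f x) = -((N + 2) / 2 * ∫ x, ‖x‖ ^ 2 * (f x * f x)) := by
  have hnorm : Continuous fun x : EuclideanSpace ℝ (Fin N) => ‖x‖ ^ 2 := continuous_norm.pow 2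
  have hcoord (i : Fin N) : Continuous fun x : EuclideanSpace ℝ (Fin N) => x i :=
    (EuclideanSpace.proj (𝕜 := ℝ) i).continuous
  have hff := hfr.mul hfr
  have hffc := hf.continuous.fun_mul hf.continuous
  have hw : Integrable fun x => ‖x‖ ^ 2 * (f x * f x) :=
    hff.norm_sq_mul.integrable (hnorm.mul hffc).aestronglyMeasurable
  have hEf : Integrable fun x => eulerDeriv f x * (‖x‖ ^ 2 * f x) :=
    integrable_eulerDeriv_mul hdf hfr.norm_sq_mul (hnorm.mul hf.continuous).aestronglyMeasurable
  have hxw (i : Fin N) : Integrable fun x => x i * (‖x‖ ^ 2 * (f x * f x)) :=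
    (hff.norm_sq_mul.coord_mul i).integrable
      ((hcoord i).mul (hnorm.mul hffc)).aestronglyMeasurable
  have hxdw (i : Fin N) :
      Integrable fun x => x i * partialDeriv i (fun y => ‖y‖ ^ 2 * (f y * f y)) x := by
    have h₁ : Integrable fun x => x i * (x i * (f x * f x)) :=
      ((hff.coord_mul i).coord_mul i).integrable
        ((hcoord i).mul ((hcoord i).mul hffc)).aestronglyMeasurable
    have h₂ : Integrable fun x => x i * (‖x‖ ^ 2 * f x) * partialDeriv i f x :=
      ((hfr.norm_sq_mul.coord_mul i).memLp_two
        ((hcoord i).mul (hnorm.mul hf.continuous)).aestronglyMeasurable).integrable_mul (hdf i)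
    refine ((h₁.const_mul 2).add (h₂.const_mul 2)).congr (ae_of_all _ fun x => ?_)
    simp only [Pi.add_apply, partialDeriv_norm_sq_mul_sq i (hf.differentiable one_ne_zero)]
    ring
  have hdiff := hf.differentiable one_ne_zero
  have hvirial := integral_eulerDeriv
    (((contDiff_norm_sq ℝ).differentiable one_ne_zero).fun_mul (hdiff.fun_mul hdiff)) hw hxw hxdw
  simp only [eulerDeriv_norm_sq_mul_sq hdiff] at hvirial
  rw [integral_add (hw.const_mul 2) (hEf.const_mul 2), integral_const_mul,
    integral_const_mul] at hvirial
  linarith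

end Virial

section Schrodinger

variable {N : ℕ}

/-- The Schrödinger operator `-Δ + V` with potential `V`. -/
def schrodinger (V f : EuclideanSpace ℝ (Fin N) → ℝ) (x : EuclideanSpace ℝ (Fin N)) : ℝ :=
  -lapl f x + V x * f x

/-- The potential `1 - (1 + s) Q ^ s`, for which `schrodinger` is the operator `L₊`: minus the
linearization of `Q ↦ ΔQ - Q + Q ^ (1 + s)`. -/
def linearizedPotential (s : ℝ) (Q : EuclideanSpace ℝ (Fin N) → ℝ)
    (x : EuclideanSpace ℝ (Fin N)) : ℝ :=
  1 - (1 + s) * Q x ^ s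

/-- The derivative at `c = 1` of the rescaling `c ^ (2 / s) Q(c x)`, which carries solutions of
`ΔQ - Q + Q ^ (1 + s) = 0` to solutions of `ΔQ - c ^ 2 Q + Q ^ (1 + s) = 0`. -/
def scalingGenerator (s : ℝ) (Q : EuclideanSpace ℝ (Fin N) → ℝ)
    (x : EuclideanSpace ℝ (Fin N)) : ℝ :=
  2 / s * Q x + eulerDeriv Q x

theorem integral_schrodinger_mul {V f g : EuclideanSpace ℝ (Fin N) → ℝ} (hf : ContDiff ℝ 2 f)
    (hg : ContDiff ℝ 2 g) (hfg : Integrable fun x => f x * g x)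
    (hfdg : ∀ i, Integrable fun x => f x * partialDeriv i g x)
    (hfVg : Integrable fun x => f x * (V x * g x))
    (hSfg : Integrable fun x => schrodinger V f x * g x)
    (hfSg : Integrable fun x => f x * schrodinger V g x) :
    ∫ x, schrodinger V f x * g x = ∫ x, f x * schrodinger V g x := by
  have hlf (x : EuclideanSpace ℝ (Fin N)) :
      lapl f x * g x = f x * (V x * g x) - schrodinger V f x * g x := by
    unfold schrodinger; ring
  have hlg (x : EuclideanSpace ℝ (Fin N)) :
      f x * lapl g x = f x * (V x * g x) - f x * schrodinger V g x := by
    unfold schrodinger; ring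
  have hgreen := integral_lapl_mul hf hg hfg hfdg (by simp only [hlf]; exact hfVg.sub hSfg)
    (by simp only [hlg]; exact hfVg.sub hfSg)
  simp only [hlf, hlg] at hgreen
  rwa [integral_sub hfVg hSfg, integral_sub hfVg hfSg, sub_right_inj] at hgreen

theorem isRapidlyDecreasing_schrodinger_schwartzMap {V : EuclideanSpace ℝ (Fin N) → ℝ} {B : ℝ}
    (hV : ∀ x, ‖V x‖ ≤ B) (φ : SchwartzMap (EuclideanSpace ℝ (Fin N)) ℝ) :
    IsRapidlyDecreasing (schrodinger V φ) :=
  (isRapidlyDecreasing_neg_lapl_schwartzMap φ).add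
    ((isRapidlyDecreasing_schwartzMap φ).bdd_mul hV)

variable {s : ℝ} {Q : EuclideanSpace ℝ (Fin N) → ℝ}

theorem exists_norm_rpow_le {α : Type*} {f : α → ℝ} (hs : 0 ≤ s) (hf : ∀ x, 0 ≤ f x)
    (hbdd : ∃ C, ∀ x, f x ≤ C) : ∃ B, ∀ x, ‖f x ^ s‖ ≤ B := by
  obtain ⟨C, hC⟩ := hbdd
  refine ⟨C ^ s, fun x => ?_⟩
  rw [Real.norm_of_nonneg (Real.rpow_nonneg (hf x) s)]
  exact Real.rpow_le_rpow (hf x) (hC x) hs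

theorem exists_norm_linearizedPotential_le (hs : 0 ≤ s) (hpos : ∀ x, 0 ≤ Q x)
    (hbdd : ∃ C, ∀ x, Q x ≤ C) : ∃ B, ∀ x, ‖linearizedPotential s Q x‖ ≤ B := by
  obtain ⟨B, hB⟩ := exists_norm_rpow_le hs hpos hbdd
  refine ⟨1 + ‖1 + s‖ * B, fun x => (norm_sub_le _ _).trans ?_⟩
  rw [norm_one, norm_mul]
  gcongr
  exact hB x

theorem contDiff_scalingGenerator (hQ : ContDiff ℝ 3 Q) : ContDiff ℝ 2 (scalingGenerator s Q) :=
  (contDiff_const.mul (hQ.of_le (by norm_num))).add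
    (contDiff_eulerDeriv (by rwa [two_add_one_eq_three]))

theorem eulerDeriv_sub_rpow (hQ : Differentiable ℝ Q) (hpos : ∀ x, 0 < Q x)
    (x : EuclideanSpace ℝ (Fin N)) :
    eulerDeriv (fun y => Q y - Q y ^ (1 + s)) x = linearizedPotential s Q x * eulerDeriv Q x := by
  have hpow := (hQ x).hasFDerivAt.rpow_const (p := 1 + s) (Or.inl (hpos x).ne')
  unfold eulerDeriv linearizedPotential
  rw [((hQ x).hasFDerivAt.fun_sub hpow).fderiv]
  simp [sub_mul]

theorem schrodinger_scalingGenerator (hs : s ≠ 0) (hQ : ContDiff ℝ 3 Q) (hpos : ∀ x, 0 < Q x)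
    (heq : ∀ x, lapl Q x - Q x + Q x ^ (1 + s) = 0) (x : EuclideanSpace ℝ (Fin N)) :
    schrodinger (linearizedPotential s Q) (scalingGenerator s Q) x = -2 * Q x := by
  have hQ2 : ContDiff ℝ 2 Q := hQ.of_le (by norm_num)
  have hlapl : lapl Q = fun y => Q y - Q y ^ (1 + s) := funext fun y => by linarith [heq y]
  have hgen : scalingGenerator s Q = fun y => (2 / s) • Q y + eulerDeriv Q y := rfl
  have hlaplgen : lapl (scalingGenerator s Q) x = 2 / s * (Q x - Q x ^ (1 + s)) +
      (linearizedPotential s Q x * eulerDeriv Q x + 2 * (Q x - Q x ^ (1 + s))) := by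
    rw [hgen, lapl_add (contDiff_const.fun_smul hQ2)
      (contDiff_eulerDeriv (by rwa [two_add_one_eq_three])), lapl_const_smul, lapl_eulerDeriv hQ,
      hlapl, eulerDeriv_sub_rpow (hQ.differentiable three_ne_zero) hpos, smul_eq_mul, smul_eq_mul]
  unfold schrodinger
  rw [hlaplgen]
  simp only [scalingGenerator, linearizedPotential, Real.rpow_add (hpos x), Real.rpow_one]
  field_simp
  ring

theorem integrable_scalingGenerator_mul {h : EuclideanSpace ℝ (Fin N) → ℝ} {B : ℝ}
    (hQ : AEStronglyMeasurable Q) (hB : ∀ x, ‖Q x‖ ≤ B) (hdQ : ∀ i, MemLp (partialDeriv i Q) 2)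
    (hh : IsRapidlyDecreasing h) (hhm : AEStronglyMeasurable h) :
    Integrable fun x => scalingGenerator s Q x * h x := by
  have hQh := (hh.bdd_mul hB).integrable (hQ.mul hhm)
  refine ((hQh.const_mul (2 / s)).add (integrable_eulerDeriv_mul hdQ hh hhm)).congr
    (ae_of_all _ fun x => ?_)
  simp only [scalingGenerator, Pi.add_apply]
  ring

theorem integral_scalingGenerator_mul_norm_sq_mul (hQ : ContDiff ℝ 1 Q)
    (hQr : IsRapidlyDecreasing Q) (hdQ : ∀ i, MemLp (partialDeriv i Q) 2) :
    ∫ x, scalingGenerator s Q x * (‖x‖ ^ 2 * Q x) =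
      (2 / s - (N + 2) / 2) * ∫ x, ‖x‖ ^ 2 * Q x ^ 2 := by
  have hnorm : Continuous fun x : EuclideanSpace ℝ (Fin N) => ‖x‖ ^ 2 := continuous_norm.pow 2
  have hQQ : Integrable fun x => ‖x‖ ^ 2 * (Q x * Q x) := (hQr.mul hQr).norm_sq_mul.integrable
    (hnorm.mul (hQ.continuous.fun_mul hQ.continuous)).aestronglyMeasurable
  have hEQ := integrable_eulerDeriv_mul hdQ hQr.norm_sq_mul
    (hnorm.mul hQ.continuous).aestronglyMeasurable
  have hsplit (x : EuclideanSpace ℝ (Fin N)) : scalingGenerator s Q x * (‖x‖ ^ 2 * Q x) =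
      2 / s * (‖x‖ ^ 2 * (Q x * Q x)) + eulerDeriv Q x * (‖x‖ ^ 2 * Q x) := by
    unfold scalingGenerator; ring
  simp only [hsplit, pow_two (Q _)]
  rw [integral_add (hQQ.const_mul _) hEQ, integral_const_mul,
    integral_eulerDeriv_mul_norm_sq_mul hQ hQr hdQ]
  ring

theorem memLp_two_partialDeriv_of_isRapidlyDecreasing (hs : 0 ≤ s) (hQ : ContDiff ℝ 2 Q)
    (hpos : ∀ x, 0 < Q x) (hQr : IsRapidlyDecreasing Q)
    (heq : ∀ x, lapl Q x - Q x + Q x ^ (1 + s) = 0) (i : Fin N) :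
    MemLp (partialDeriv i Q) 2 := by
  obtain ⟨B, hB⟩ := hQr.exists_norm_le
  obtain ⟨D, hD⟩ := exists_norm_rpow_le hs (fun x => (hpos x).le)
    ⟨B, fun x => (Real.le_norm_self _).trans (hB x)⟩
  have hlapl (x : EuclideanSpace ℝ (Fin N)) : Q x * lapl Q x = (1 - Q x ^ s) * (Q x * Q x) := by
    have hpow : Q x ^ (1 + s) = Q x * Q x ^ s := by rw [Real.rpow_add (hpos x), Real.rpow_one]
    linear_combination Q x * heq x - Q x * hpow
  have hbound (x : EuclideanSpace ℝ (Fin N)) : ‖1 - Q x ^ s‖ ≤ 1 + D :=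
    (norm_sub_le _ _).trans (by rw [norm_one]; gcongr; exact hD x)
  have hQlapl : Integrable fun x => Q x * lapl Q x :=
    IsRapidlyDecreasing.integrable (by simpa only [hlapl] using (hQr.mul hQr).bdd_mul hbound)
      (hQ.continuous.mul (continuous_lapl hQ)).aestronglyMeasurable
  exact memLp_two_partialDeriv i (hQ.of_le one_le_two) (integrable_gradSq hQ
    (hQr.memLp_two hQ.continuous.aestronglyMeasurable).integrable_sq hQlapl)

theorem continuous_linearizedPotential (hQ : Continuous Q) (hpos : ∀ x, 0 < Q x) :
    Continuous (linearizedPotential s Q) :=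
  continuous_const.sub (continuous_const.mul (hQ.rpow_const fun x => Or.inl (hpos x).ne'))

theorem integral_scalingGenerator_mul_schrodinger (hs : s ≠ 0) (hQ : ContDiff ℝ 3 Q)
    (hpos : ∀ x, 0 < Q x) (hQr : IsRapidlyDecreasing Q) (hdQ : ∀ i, MemLp (partialDeriv i Q) 2)
    {B : ℝ} (hV : ∀ x, ‖linearizedPotential s Q x‖ ≤ B)
    (heq : ∀ x, lapl Q x - Q x + Q x ^ (1 + s) = 0)
    (φ : SchwartzMap (EuclideanSpace ℝ (Fin N)) ℝ) :
    ∫ x, scalingGenerator s Q x * schrodinger (linearizedPotential s Q) φ x =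
      -2 * ∫ x, Q x * φ x := by
  obtain ⟨K, hK⟩ := hQr.exists_norm_le
  have hφr := isRapidlyDecreasing_schwartzMap φ
  have hVc : Continuous (linearizedPotential s Q) :=
    continuous_linearizedPotential hQ.continuous hpos
  have hpair {h : EuclideanSpace ℝ (Fin N) → ℝ} (hh : IsRapidlyDecreasing h) (hhc : Continuous h) :
      Integrable fun x => scalingGenerator s Q x * h x :=
    integrable_scalingGenerator_mul hQ.continuous.aestronglyMeasurable hK hdQ hh
      hhc.aestronglyMeasurable
  have hQφ : Integrable fun x => Q x * φ x :=
    (hQr.mul hφr).integrable (hQ.continuous.mul φ.continuous).aestronglyMeasurable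
  have hSgen := schrodinger_scalingGenerator hs hQ hpos heq
  have hsymm := integral_schrodinger_mul (V := linearizedPotential s Q)
    (contDiff_scalingGenerator (s := s) hQ) (φ.smooth 2) (hpair hφr φ.continuous)
    (fun i => hpair (isRapidlyDecreasing_partialDeriv_schwartzMap i φ)
      (continuous_partialDeriv i (φ.smooth 1)))
    (hpair (hφr.bdd_mul hV) (hVc.mul φ.continuous))
    (by simpa only [hSgen, mul_assoc] using hQφ.const_mul (-2))
    (hpair (isRapidlyDecreasing_schrodinger_schwartzMap hV φ)
      ((continuous_lapl (φ.smooth 2)).neg.add (hVc.mul φ.continuous)))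
  simp only [← hsymm, hSgen, mul_assoc, integral_const_mul]

end Schrodinger

theorem Q_rho_inner_general {N : ℕ} {s : ℝ} (hs : 0 < s) {Q : EuclideanSpace ℝ (Fin N) → ℝ}
    (hQ : ContDiff ℝ 3 Q) (hpos : ∀ x, 0 < Q x) (hbdd : ∃ C, ∀ x, Q x ≤ C)
    (heq : ∀ x, lapl Q x - Q x + Q x ^ (1 + s) = 0)
    (ρ : SchwartzMap (EuclideanSpace ℝ (Fin N)) ℝ)
    (hρ : ∀ x, schrodinger (linearizedPotential s Q) ρ x = ‖x‖ ^ 2 * Q x) :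
    ∫ x, Q x * ρ x = ((N + 2) / 4 - 1 / s) * ∫ x, ‖x‖ ^ 2 * Q x ^ 2 := by
  obtain ⟨B, hB⟩ : ∃ B, ∀ x, ‖Q x‖ ≤ B :=
    hbdd.imp fun C hC x => (Real.norm_of_nonneg (hpos x).le).trans_le (hC x)
  obtain ⟨K, hK⟩ := exists_norm_linearizedPotential_le hs.le (fun x => (hpos x).le) hbdd
  have hQr : IsRapidlyDecreasing Q := IsRapidlyDecreasing.of_norm_sq_mul
    (by simpa only [← hρ] using isRapidlyDecreasing_schrodinger_schwartzMap hK ρ) hB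
  have hdQ := memLp_two_partialDeriv_of_isRapidlyDecreasing hs.le (hQ.of_le (by norm_num)) hpos
    hQr heq
  have hsymm := integral_scalingGenerator_mul_schrodinger hs.ne' hQ hpos hQr hdQ hK heq ρ
  simp only [hρ] at hsymm
  rw [integral_scalingGenerator_mul_norm_sq_mul (hQ.of_le (by norm_num)) hQr hdQ] at hsymm
  linear_combination (1 / 2) * hsymm

/-- if `ρ` is the radial Schwartz solution of `L₊ρ = |x|²Q`, then
`(Q, ρ)₂ = ½ ‖|x|Q‖₂²`. -/
theorem Q_rho_inner (N : ℕ) (hN : 1 ≤ N) (Q : EuclideanSpace ℝ (Fin N) → ℝ)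
    (hQ : IsGroundState N Q) (ρ : SchwartzMap (EuclideanSpace ℝ (Fin N)) ℝ)
    (hρrad : ∀ x y, ‖x‖ = ‖y‖ → ρ x = ρ y)
    (hρ : ∀ x, -lapl (⇑ρ) x + ρ x - (1 + 4 / N) * Q x ^ ((4:ℝ) / N) * ρ x = ‖x‖ ^ 2 * Q x) :
    ∫ x, Q x * ρ x = (1 / 2) * ∫ x, ‖x‖ ^ 2 * (Q x) ^ 2 := by
  obtain ⟨hsmooth, hpos, -, heq, C, c, hC, hc, hdecay⟩ := hQ
  have hN' : (0 : ℝ) < N := Nat.cast_pos.mpr hN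
  have hbdd (x : EuclideanSpace ℝ (Fin N)) : Q x ≤ C :=
    (hdecay x).trans (mul_le_of_le_one_right hC.le
      (Real.exp_le_one_iff.mpr (mul_nonpos_of_nonpos_of_nonneg (neg_nonpos.mpr hc.le)
        (norm_nonneg x))))
  have hρ' (x : EuclideanSpace ℝ (Fin N)) :
      schrodinger (linearizedPotential (4 / N) Q) ρ x = ‖x‖ ^ 2 * Q x := by
    rw [← hρ x]
    unfold schrodinger linearizedPotential
    ring
  rw [Q_rho_inner_general (div_pos four_pos hN') (contDiff_infty.mp hsmooth 3) hpos ⟨C, hbdd⟩ heq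
    ρ hρ']
  field_simp
  ring
end
end

section
/- Let Q be the ground state on ℝ^N and let ρ be the unique radial Schwartz solution of L₊ρ = |x|²Q, where L₊ := −Δ + 1 − (1+4/N)Q^{4/N}. Then: (i) for every multi-index a ∈ ℕ₀^N there is a constant C_a > 0 such that |∂^a Q(x)| ≤ C_a Q(x) for all x ∈ ℝ^N; (ii) for every multi-index a ∈ ℕ₀^N there are constants C_a > 0 and κ_a > 0 such that |∂^a ρ(x)| ≤ C_a (1+|x|)^{κ_a} Q(x) for all x ∈ ℝ^N. -/
open MeasureTheory Filter Complex

noncomputable section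

/-!
Let `q` be the radial profile of `Q` and `g = q ^ (4 / N)` its potential. As `g → 0`, the equation
of `q` forces `q' / q → -1`. Hence the cross term `2 (k + 1) r ^ k q'` in the Laplacian of
`r ^ (k + 1) q` beats the source `r ^ k q` in the equation of `ρ` (where `k = 2`), so that
`r ^ (k + 1) q` is a supersolution and the minimum principle gives `ρ = O(r ^ (k + 1) q)`; a
first-order differential inequality then bounds `ρ'` in the same way.

Away from the origin, every derivative of `Q` is `P Q` with `P` in the algebra generated by the
`xᵢ / |x|` and the values at `|x|` of `1 / r`, `q' / q` and `g`, all bounded at infinity: by the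
radial equation this algebra is closed under differentiation. For `ρ` one adds the generators `r`,
`ρ / q` and `ρ' / q`, which grow polynomially. Near the origin the bounds hold by compactness.
-/

open Topology Asymptotics

/-! ### Ordinary differential inequalities near infinity -/

theorem le_of_deriv_neg_of_eq {h : ℝ → ℝ} {a c r : ℝ} (hd : Differentiable ℝ h) (ha : h a ≤ c)
    (hneg : ∀ r, a ≤ r → h r = c → deriv h r < 0) (hr : a ≤ r) : h r ≤ c :=
  image_le_of_deriv_right_lt_deriv_boundary hd.continuous.continuousOn
    (fun x _ ↦ (hd x).hasDerivAt.hasDerivWithinAt) ha (fun x ↦ hasDerivAt_const x c)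
    (fun x hx ↦ hneg x hx.1) ⟨hr, le_rfl⟩

theorem tendsto_atBot_of_deriv_le {u : ℝ → ℝ} {δ : ℝ} (hu : Differentiable ℝ u) (hδ : δ < 0)
    (hle : ∀ᶠ r in atTop, deriv u r ≤ δ) : Tendsto u atTop atBot := by
  obtain ⟨b, hb⟩ := eventually_atTop.1 hle
  have hlin : ∀ r, b ≤ r → u r ≤ u b + δ * (r - b) := fun r hr ↦ by
    have := (convex_Ici b).image_sub_le_mul_sub_of_deriv_le hu.continuous.continuousOn
      hu.differentiableOn (fun x hx ↦ hb x (interior_subset hx)) b Set.self_mem_Ici r hr hr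
    linarith
  refine tendsto_atBot_mono' atTop ((eventually_ge_atTop b).mono hlin) ?_
  exact tendsto_atBot_add_const_left _ _
    ((tendsto_atTop_add_const_right _ (-b) tendsto_id).const_mul_atTop_of_neg hδ)

theorem eventually_nonneg_of_tendsto_deriv_sub {u H : ℝ → ℝ} (hu : Differentiable ℝ u)
    (hH : Differentiable ℝ H) (hu0 : Tendsto u atTop (𝓝 0))
    (hsub : Tendsto (fun r ↦ deriv u r - H r) atTop (𝓝 0))
    (hneg : ∀ᶠ r in atTop, H r < 0 → deriv H r < 0) : ∀ᶠ r in atTop, 0 ≤ H r := by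
  by_contra hcon
  obtain ⟨a, ha⟩ := eventually_atTop.1 hneg
  obtain ⟨b, hab, hb⟩ : ∃ b, a ≤ b ∧ H b < 0 := by
    simpa using (frequently_atTop.1 (not_eventually.1 hcon)) a
  have hbarrier : ∀ r, b ≤ r → H r ≤ H b := fun r hr ↦
    le_of_deriv_neg_of_eq hH le_rfl
      (fun s hs hsb ↦ ha s (hab.trans hs) (hsb.trans_lt hb)) hr
  have hle : ∀ᶠ r in atTop, deriv u r ≤ H b / 2 := by
    filter_upwards [eventually_ge_atTop b, hsub.eventually_le_const (by linarith : 0 < -H b / 2)]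
      with r hr hr'
    linarith [hbarrier r hr]
  exact not_tendsto_atBot_of_tendsto_nhds hu0 (tendsto_atBot_of_deriv_le hu (by linarith) hle)

theorem deriv_deriv_nonneg_of_isLocalMin {u : ℝ → ℝ} {x : ℝ} (h : IsLocalMin u x)
    (hu : ContinuousAt u x) : 0 ≤ deriv (deriv u) x := by
  by_contra! hneg
  have hmax : IsLocalMax u x := isLocalMax_of_deriv_deriv_neg hneg h.deriv_eq_zero hu
  have hconst : u =ᶠ[𝓝 x] fun _ ↦ u x := by
    filter_upwards [h, hmax] with y hy hy' using le_antisymm hy' hy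
  have : deriv (deriv u) x = 0 := by
    rw [hconst.deriv.deriv_eq]
    simp
  exact hneg.ne this

/-! ### The radial Laplacian -/

/-- The radial part `u'' + (m / r) u'` of the Laplacian; on `ℝ^N` one has `m = N - 1`. -/
def radialLapl (m : ℝ) (u : ℝ → ℝ) (r : ℝ) : ℝ :=
  deriv (deriv u) r + m / r * deriv u r

section RadialLapl

variable {m : ℝ} {u v : ℝ → ℝ}

theorem radialLapl_add (hu : ContDiff ℝ 2 u) (hv : ContDiff ℝ 2 v) (r : ℝ) :
    radialLapl m (fun s ↦ u s + v s) r = radialLapl m u r + radialLapl m v r := by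
  have hd : deriv (fun s ↦ u s + v s) = fun s ↦ deriv u s + deriv v s :=
    funext fun s ↦ deriv_fun_add (hu.differentiable two_ne_zero s) (hv.differentiable two_ne_zero s)
  simp only [radialLapl, hd,
    deriv_fun_add (hu.differentiable_deriv_two r) (hv.differentiable_deriv_two r)]
  ring

theorem radialLapl_const_mul (c : ℝ) (u : ℝ → ℝ) (r : ℝ) :
    radialLapl m (fun s ↦ c * u s) r = c * radialLapl m u r := by
  simp only [radialLapl, deriv_const_mul_field']
  ring

theorem radialLapl_neg (u : ℝ → ℝ) (r : ℝ) :
    radialLapl m (fun s ↦ -u s) r = -radialLapl m u r := by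
  simpa using radialLapl_const_mul (m := m) (-1) u r

theorem radialLapl_mul (hu : ContDiff ℝ 2 u) (hv : ContDiff ℝ 2 v) (r : ℝ) :
    radialLapl m (fun s ↦ u s * v s) r =
      radialLapl m u r * v r + 2 * (deriv u r * deriv v r) + u r * radialLapl m v r := by
  have hu1 := hu.differentiable two_ne_zero
  have hv1 := hv.differentiable two_ne_zero
  have hu2 := hu.differentiable_deriv_two
  have hv2 := hv.differentiable_deriv_two
  have hd : deriv (fun s ↦ u s * v s) = fun s ↦ deriv u s * v s + u s * deriv v s :=
    funext fun s ↦ deriv_fun_mul (hu1 s) (hv1 s)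
  simp only [radialLapl, hd, deriv_fun_add ((hu2 r).fun_mul (hv1 r)) ((hu1 r).fun_mul (hv2 r)),
    deriv_fun_mul (hu2 r) (hv1 r), deriv_fun_mul (hu1 r) (hv2 r)]
  ring

theorem radialLapl_pow_succ (k : ℕ) {r : ℝ} (hr : r ≠ 0) :
    radialLapl m (fun s ↦ s ^ (k + 1)) r = (k + 1) * (k + m) / r * r ^ k := by
  have hd : deriv (fun s : ℝ ↦ s ^ (k + 1)) = fun s ↦ (k + 1 : ℝ) * s ^ k := by
    ext s; simp
  rw [radialLapl, hd, deriv_const_mul _ (differentiable_pow k r), deriv_pow_field]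
  rcases k with _ | k
  · simp
  · simp only [Nat.add_sub_cancel]
    push_cast
    field_simp
    ring

theorem eventually_nonneg_deriv_add_mul {c : ℝ} (hc : 0 < c) (hu : ContDiff ℝ 2 u)
    (hu0 : Tendsto u atTop (𝓝 0))
    (hle : ∀ᶠ r in atTop, radialLapl m u r ≤ c * (c - m / r) * u r) :
    ∀ᶠ r in atTop, 0 ≤ deriv u r + c * u r := by
  have hu1 := hu.differentiable two_ne_zero
  have hu2 := hu.differentiable_deriv_two
  refine eventually_nonneg_of_tendsto_deriv_sub (H := fun r ↦ deriv u r + c * u r)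
    hu1 (hu2.add (hu1.const_mul c)) hu0 ?_ ?_
  · simpa using hu0.const_mul (-c)
  have hm : ∀ᶠ r in atTop, m / r < c :=
    (tendsto_const_nhds.div_atTop tendsto_id).eventually_lt_const hc
  filter_upwards [hle, hm] with r hle hm hneg
  rw [deriv_fun_add (hu2 r) ((hu1 r).const_mul c), deriv_const_mul c (hu1 r)]
  -- `H = u' + c u` satisfies `H' = (Δu - c (c - m / r) u) + (c - m / r) H`
  have := mul_neg_of_pos_of_neg (sub_pos.2 hm) hneg
  rw [radialLapl] at hle
  linarith

theorem nonneg_of_radialLapl_le {V : ℝ → ℝ} {a r : ℝ} (hu : Continuous u) (ha : 0 ≤ u a)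
    (hu0 : Tendsto u atTop (𝓝 0)) (hV : ∀ s, a ≤ s → 0 < V s)
    (hle : ∀ s, a ≤ s → radialLapl m u s ≤ V s * u s) (hr : a ≤ r) : 0 ≤ u r := by
  by_contra! hneg
  obtain ⟨M, hrM, hM⟩ : ∃ M, r ≤ M ∧ u r < u M :=
    ((eventually_ge_atTop r).and (hu0.eventually_const_lt hneg)).exists
  obtain ⟨x, hx, hmin⟩ := isCompact_Icc.exists_isMinOn
    ⟨r, hr, hrM⟩ (hu.continuousOn (s := Set.Icc a M))
  have hxr : u x ≤ u r := hmin ⟨hr, hrM⟩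
  have hxa : a < x := hx.1.lt_of_ne (by rintro rfl; linarith)
  have hxM : x < M := hx.2.lt_of_ne (by rintro rfl; linarith)
  have hloc : IsLocalMin u x := hmin.isLocalMin (Icc_mem_nhds hxa hxM)
  have h2 := deriv_deriv_nonneg_of_isLocalMin hloc hu.continuousAt
  have h1 := hle x hx.1
  rw [radialLapl, hloc.deriv_eq_zero, mul_zero, add_zero] at h1
  linarith [mul_neg_of_pos_of_neg (hV x hx.1) (hxr.trans_lt hneg)]

end RadialLapl

section Comparison

variable {m : ℝ} {R ψ : ℝ → ℝ}

theorem exists_eventually_neg_mul_le {V f : ℝ → ℝ} (hR : ContDiff ℝ 2 R) (hψ : ContDiff ℝ 2 ψ)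
    (hR0 : Tendsto R atTop (𝓝 0)) (hψ0 : Tendsto ψ atTop (𝓝 0)) (hψpos : ∀ᶠ r in atTop, 0 < ψ r)
    (hV : ∀ᶠ r in atTop, 0 < V r) (hf : ∀ᶠ r in atTop, 0 ≤ f r)
    (hψle : ∀ᶠ r in atTop, radialLapl m ψ r ≤ V r * ψ r - f r)
    (hRle : ∀ᶠ r in atTop, radialLapl m R r ≤ V r * R r + f r) :
    ∃ C, ∀ᶠ r in atTop, -(C * ψ r) ≤ R r := by
  obtain ⟨a, ha⟩ := eventually_atTop.1 (hψpos.and <| hV.and <| hf.and <| hψle.and hRle)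
  set C := max 1 (-R a / ψ a)
  have hCa : 0 ≤ C * ψ a + R a := by
    have := (div_le_iff₀ (ha a le_rfl).1).1 (le_max_right 1 (-R a / ψ a))
    linarith
  refine ⟨C, (eventually_ge_atTop a).mono fun r hr ↦ ?_⟩
  have : 0 ≤ C * ψ r + R r := by
    refine nonneg_of_radialLapl_le (m := m) (u := fun s ↦ C * ψ s + R s)
      ((hψ.continuous.const_mul C).add hR.continuous) hCa
      (by simpa using (hψ0.const_mul C).add hR0) (fun s hs ↦ (ha s hs).2.1) (fun s hs ↦ ?_) hr
    obtain ⟨-, -, hf, hψle, hRle⟩ := ha s hs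
    rw [radialLapl_add (contDiff_const.mul hψ) hR, radialLapl_const_mul]
    have hC : 1 ≤ C := le_max_left _ _
    have hCψ := mul_le_mul_of_nonneg_left hψle (zero_le_one.trans hC)
    linarith [mul_le_mul_of_nonneg_right hC hf]
  linarith

theorem isBigO_of_eventually_neg_mul_le {f g : ℝ → ℝ} {C D : ℝ} (hg : ∀ᶠ r in atTop, 0 ≤ g r)
    (hneg : ∀ᶠ r in atTop, -(C * g r) ≤ f r) (hpos : ∀ᶠ r in atTop, -(D * g r) ≤ -f r) :
    f =O[atTop] g := by
  refine IsBigO.of_bound (max C D) ?_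
  filter_upwards [hg, hneg, hpos] with r hg hneg hpos
  rw [Real.norm_eq_abs, Real.norm_of_nonneg hg, abs_le]
  have hC := mul_le_mul_of_nonneg_right (le_max_left C D) hg
  have hD := mul_le_mul_of_nonneg_right (le_max_right C D) hg
  constructor <;> linarith

theorem isBigO_of_abs_radialLapl_sub_le {V f : ℝ → ℝ} (hR : ContDiff ℝ 2 R) (hψ : ContDiff ℝ 2 ψ)
    (hR0 : Tendsto R atTop (𝓝 0)) (hψ0 : Tendsto ψ atTop (𝓝 0)) (hψpos : ∀ᶠ r in atTop, 0 < ψ r)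
    (hV : ∀ᶠ r in atTop, 0 < V r)
    (hψle : ∀ᶠ r in atTop, radialLapl m ψ r ≤ V r * ψ r - f r)
    (hRle : ∀ᶠ r in atTop, |radialLapl m R r - V r * R r| ≤ f r) : R =O[atTop] ψ := by
  have hf : ∀ᶠ r in atTop, 0 ≤ f r := hRle.mono fun r hr ↦ (abs_nonneg _).trans hr
  obtain ⟨C, hC⟩ := exists_eventually_neg_mul_le (m := m) hR hψ hR0 hψ0 hψpos hV hf hψle <|
    hRle.mono fun r hr ↦ by linarith [(abs_le.1 hr).2]
  obtain ⟨D, hD⟩ := exists_eventually_neg_mul_le (m := m) (R := fun r ↦ -R r) hR.neg hψ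
    (by simpa using hR0.neg) hψ0 hψpos hV hf hψle <| hRle.mono fun r hr ↦ by
      rw [radialLapl_neg]
      linarith [(abs_le.1 hr).1]
  exact isBigO_of_eventually_neg_mul_le (hψpos.mono fun r ↦ le_of_lt) hC hD

theorem exists_eventually_neg_mul_le_deriv (hR : ContDiff ℝ 2 R) (hψ : ContDiff ℝ 2 ψ)
    (hψ0 : Tendsto ψ atTop (𝓝 0)) (hψpos : ∀ᶠ r in atTop, 0 < ψ r)
    (hψ' : deriv ψ =O[atTop] ψ) (hψle : ∀ᶠ r in atTop, radialLapl m ψ r ≤ 2 * ψ r)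
    (hRψ : R =O[atTop] ψ) (hRle : radialLapl m R =O[atTop] ψ) :
    ∃ C, ∀ᶠ r in atTop, -(C * ψ r) ≤ deriv R r := by
  obtain ⟨M, hM⟩ := hψ'.bound
  obtain ⟨K, hK0, hK⟩ := hRψ.exists_nonneg
  obtain ⟨L, hL0, hL⟩ := hRle.exists_nonneg
  -- `B` solves `L + 2 B = 3 (B - K)`, which makes `u = R + B ψ` admissible with rate `c = 2`.
  set B := L + 3 * K with hB
  have hB0 : 0 ≤ B := by positivity
  have hu := hR.add (contDiff_const.mul hψ : ContDiff ℝ 2 fun r ↦ B * ψ r)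
  have hu0 : Tendsto (fun r ↦ R r + B * ψ r) atTop (𝓝 0) := by
    simpa using (hRψ.trans_tendsto hψ0).add (hψ0.const_mul B)
  have hm : ∀ᶠ r in atTop, m / r < 1 / 2 :=
    (tendsto_const_nhds.div_atTop tendsto_id).eventually_lt_const one_half_pos
  have hnonneg := eventually_nonneg_deriv_add_mul (m := m) two_pos hu hu0 <| by
    filter_upwards [hψpos, hψle, hK.bound, hL.bound, hm] with r hψpos hψle hK hL hm
    rw [Real.norm_eq_abs, Real.norm_of_nonneg hψpos.le, abs_le] at hK hL
    have hlow : (B - K) * ψ r ≤ R r + B * ψ r := by linarith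
    have hlow0 : 0 ≤ (B - K) * ψ r := mul_nonneg (by linarith) hψpos.le
    calc radialLapl m (fun r ↦ R r + B * ψ r) r
        = radialLapl m R r + B * radialLapl m ψ r := by
          rw [radialLapl_add hR (contDiff_const.mul hψ), radialLapl_const_mul]
      _ ≤ L * ψ r + B * (2 * ψ r) := add_le_add hL.2 (mul_le_mul_of_nonneg_left hψle hB0)
      _ = 3 * ((B - K) * ψ r) := by rw [hB]; ring
      _ ≤ 2 * (2 - m / r) * (R r + B * ψ r) :=
          mul_le_mul (by linarith) hlow hlow0 (by linarith)
  refine ⟨2 * K + B * M + 2 * B, ?_⟩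
  filter_upwards [hnonneg, hψpos, hK.bound, hM] with r h hψpos hK hM
  rw [deriv_fun_add (hR.differentiable two_ne_zero r)
    ((hψ.differentiable two_ne_zero r).const_mul B), deriv_const_mul_field] at h
  rw [Real.norm_eq_abs, Real.norm_of_nonneg hψpos.le, abs_le] at hK hM
  linarith [mul_le_mul_of_nonneg_left hM.2 hB0]

theorem isBigO_deriv_of_isBigO_radialLapl (hR : ContDiff ℝ 2 R) (hψ : ContDiff ℝ 2 ψ)
    (hψ0 : Tendsto ψ atTop (𝓝 0)) (hψpos : ∀ᶠ r in atTop, 0 < ψ r)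
    (hψ' : deriv ψ =O[atTop] ψ) (hψle : ∀ᶠ r in atTop, radialLapl m ψ r ≤ 2 * ψ r)
    (hRψ : R =O[atTop] ψ) (hRle : radialLapl m R =O[atTop] ψ) : deriv R =O[atTop] ψ := by
  obtain ⟨C, hC⟩ := exists_eventually_neg_mul_le_deriv hR hψ hψ0 hψpos hψ' hψle hRψ hRle
  obtain ⟨D, hD⟩ := exists_eventually_neg_mul_le_deriv (m := m) (R := fun r ↦ -R r) hR.neg hψ
    hψ0 hψpos hψ' hψle hRψ.neg_left (by simpa only [funext (radialLapl_neg R)] using hRle.neg_left)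
  simp only [deriv.fun_neg] at hD
  exact isBigO_of_eventually_neg_mul_le (hψpos.mono fun r ↦ le_of_lt) hC hD

end Comparison

/-! ### Decaying profiles -/

/-- A positive radial solution `q` of `Δq = (1 - g) q` that vanishes at infinity, where the
potential `g` also vanishes at infinity. The ground state is the case `g = q ^ (4 / N)`. -/
structure IsDecayingProfile (m : ℝ) (g q : ℝ → ℝ) : Prop where
  contDiff : ContDiff ℝ 2 q
  pos : ∀ r, 0 < q r
  tendsto_zero : Tendsto q atTop (𝓝 0)
  tendsto_potential : Tendsto g atTop (𝓝 0)
  radialLapl_eq : ∀ r, 0 < r → radialLapl m q r = (1 - g r) * q r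

namespace IsDecayingProfile

variable {m : ℝ} {g q : ℝ → ℝ} (h : IsDecayingProfile m g q)
include h

theorem differentiable : Differentiable ℝ q :=
  h.contDiff.differentiable two_ne_zero

theorem eventually_neg_le_logDeriv {c : ℝ} (hc : 1 < c) :
    ∀ᶠ r in atTop, -c ≤ logDeriv q r := by
  have hlim : Tendsto (fun r ↦ c * (c - m / r)) atTop (𝓝 (c * (c - 0))) :=
    (tendsto_const_nhds.sub (tendsto_const_nhds.div_atTop tendsto_id)).const_mul c
  have hlt : ∀ᶠ r in atTop, 1 - g r < c * (c - m / r) :=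
    (h.tendsto_potential.const_sub 1).eventually_lt hlim (by nlinarith)
  filter_upwards [eventually_nonneg_deriv_add_mul (m := m) (zero_lt_one.trans hc) h.contDiff
    h.tendsto_zero <| by
      filter_upwards [hlt, eventually_gt_atTop 0] with r hlt hr
      rw [h.radialLapl_eq r hr]
      exact mul_le_mul_of_nonneg_right hlt.le (h.pos r).le] with r hr
  rw [logDeriv_apply, le_div_iff₀ (h.pos r)]
  linarith

theorem eventually_logDeriv_le {c : ℝ} (hc0 : 0 < c) (hc : c < 1) :
    ∀ᶠ r in atTop, logDeriv q r ≤ -c := by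
  have hlim : Tendsto (fun r ↦ c * (c - m / r)) atTop (𝓝 (c * (c - 0))) :=
    (tendsto_const_nhds.sub (tendsto_const_nhds.div_atTop tendsto_id)).const_mul c
  have hlt : ∀ᶠ r in atTop, c * (c - m / r) < 1 - g r :=
    hlim.eventually_lt (h.tendsto_potential.const_sub 1) (by nlinarith)
  filter_upwards [eventually_nonneg_deriv_add_mul (m := m) (u := fun r ↦ -q r) hc0 h.contDiff.neg
    (by simpa using h.tendsto_zero.neg) <| by
      filter_upwards [hlt, eventually_gt_atTop 0] with r hlt hr
      rw [radialLapl_neg, h.radialLapl_eq r hr]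
      linarith [mul_le_mul_of_nonneg_right hlt.le (h.pos r).le]] with r hr
  rw [deriv.fun_neg] at hr
  rw [logDeriv_apply, div_le_iff₀ (h.pos r)]
  linarith

theorem tendsto_logDeriv : Tendsto (logDeriv q) atTop (𝓝 (-1)) := by
  refine tendsto_order.2 ⟨fun a ha ↦ ?_, fun a ha ↦ ?_⟩
  · obtain ⟨c, hc, hca⟩ := exists_between (lt_neg_of_lt_neg ha)
    filter_upwards [h.eventually_neg_le_logDeriv hc] with r hr
    linarith
  · obtain ⟨c, hc, hc1⟩ := exists_between (max_lt zero_lt_one (neg_lt.1 ha))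
    rw [max_lt_iff] at hc
    filter_upwards [h.eventually_logDeriv_le hc.1 hc1] with r hr
    linarith

theorem isBigO_exp : q =O[atTop] fun r ↦ Real.exp (-(1 / 2) * r) := by
  obtain ⟨b, hb⟩ := eventually_atTop.1 (h.eventually_logDeriv_le one_half_pos one_half_lt_one)
  have hd (r : ℝ) : HasDerivAt (fun r ↦ q r * Real.exp (1 / 2 * r))
      ((deriv q r + 1 / 2 * q r) * Real.exp (1 / 2 * r)) r := by
    refine ((h.differentiable r).hasDerivAt.mul ((hasDerivAt_const_mul (1 / 2)).exp)).congr_deriv ?_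
    ring
  have hanti : AntitoneOn (fun r ↦ q r * Real.exp (1 / 2 * r)) (Set.Ici b) := by
    refine antitoneOn_of_deriv_nonpos (convex_Ici b)
      (fun r _ ↦ (hd r).continuousAt.continuousWithinAt)
      (fun r _ ↦ (hd r).differentiableAt.differentiableWithinAt) fun r hr ↦ ?_
    have hle := hb r (interior_subset hr)
    rw [logDeriv_apply, div_le_iff₀ (h.pos r)] at hle
    rw [(hd r).deriv]
    exact mul_nonpos_of_nonpos_of_nonneg (by linarith) (Real.exp_pos _).le
  refine IsBigO.of_bound (q b * Real.exp (1 / 2 * b)) ?_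
  filter_upwards [eventually_ge_atTop b] with r hr
  rw [Real.norm_of_nonneg (h.pos r).le, Real.norm_of_nonneg (Real.exp_pos _).le, neg_mul,
    Real.exp_neg, ← div_eq_mul_inv, le_div_iff₀ (Real.exp_pos _)]
  exact hanti Set.self_mem_Ici hr hr

theorem tendsto_pow_mul_rpow (k : ℕ) {α : ℝ} (hα : 0 < α) :
    Tendsto (fun r ↦ r ^ k * q r ^ α) atTop (𝓝 0) := by
  have hexp : (fun r ↦ q r ^ α) =O[atTop] fun r ↦ Real.exp (-(α / 2) * r) := by
    refine (h.isBigO_exp.rpow hα.le (.of_forall fun r ↦ (Real.exp_pos _).le)).congr_right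
      fun r ↦ ?_
    rw [← Real.exp_mul]
    ring_nf
  refine ((isBigO_refl (fun r : ℝ ↦ r ^ k) atTop).mul hexp).trans_tendsto ?_
  simpa using tendsto_rpow_mul_exp_neg_mul_atTop_nhds_zero k _ (half_pos hα)

theorem tendsto_pow_mul (k : ℕ) : Tendsto (fun r ↦ r ^ k * q r) atTop (𝓝 0) := by
  simpa using h.tendsto_pow_mul_rpow k one_pos

theorem radialLapl_pow_succ_mul (k : ℕ) {r : ℝ} (hr : 0 < r) :
    radialLapl m (fun s ↦ s ^ (k + 1) * q s) r = (1 - g r) * (r ^ (k + 1) * q r) +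
      (2 * (k + 1) * logDeriv q r + (k + 1) * (k + m) / r) * (r ^ k * q r) := by
  rw [radialLapl_mul (contDiff_fun_id.pow (k + 1)) h.contDiff, h.radialLapl_eq r hr,
    radialLapl_pow_succ k hr.ne', logDeriv_apply]
  have := (h.pos r).ne'
  simp only [deriv_pow_field, Nat.add_sub_cancel]
  push_cast
  field_simp
  ring

theorem eventually_radialLapl_pow_succ_mul_le (hg : Tendsto (fun r ↦ r * g r) atTop (𝓝 0)) (p : ℝ)
    (k : ℕ) : ∀ᶠ r in atTop, radialLapl m (fun s ↦ s ^ (k + 1) * q s) r ≤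
      (1 - p * g r) * (r ^ (k + 1) * q r) - r ^ k * q r := by
  have hlim : Tendsto (fun r ↦ (p - 1) * (r * g r) + 2 * (k + 1) * logDeriv q r +
      (k + 1) * (k + m) / r) atTop (𝓝 ((p - 1) * 0 + 2 * (k + 1) * (-1) + 0)) :=
    ((hg.const_mul _).add (h.tendsto_logDeriv.const_mul _)).add
      (tendsto_const_nhds.div_atTop tendsto_id)
  have hlt := hlim.eventually_lt_const (u := -1) (by nlinarith [k.cast_nonneg (α := ℝ)])
  filter_upwards [hlt, eventually_gt_atTop 0] with r hlt hr
  have := mul_le_mul_of_nonneg_right hlt.le (mul_pos (pow_pos hr k) (h.pos r)).le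
  rw [h.radialLapl_pow_succ_mul k hr, pow_succ]
  linarith

theorem isBigO_deriv_pow_succ_mul (k : ℕ) :
    deriv (fun r ↦ r ^ (k + 1) * q r) =O[atTop] fun r ↦ r ^ (k + 1) * q r := by
  have hlim : Tendsto (fun r ↦ (k + 1) / r + logDeriv q r) atTop (𝓝 (0 + -1)) :=
    (tendsto_const_nhds.div_atTop tendsto_id).add h.tendsto_logDeriv
  refine ((hlim.isBigO_one ℝ).mul (isBigO_refl (fun r ↦ r ^ (k + 1) * q r) atTop)).congr' ?_
    (.of_eq (by simp))
  filter_upwards [eventually_gt_atTop 0] with r hr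
  have := (h.pos r).ne'
  rw [deriv_fun_mul (differentiable_pow (k + 1) r) (h.differentiable r), logDeriv_apply]
  simp only [deriv_pow_field, Nat.add_sub_cancel]
  push_cast
  field_simp
  ring

section Inhomogeneous

variable {p : ℝ} {k : ℕ} {R : ℝ → ℝ} (hg : Tendsto (fun r ↦ r * g r) atTop (𝓝 0))
  (hR : ContDiff ℝ 2 R) (hR0 : Tendsto R atTop (𝓝 0))
  (hReq : ∀ r, 0 < r → radialLapl m R r = (1 - p * g r) * R r - r ^ k * q r)
include hg hR hR0 hReq

theorem isBigO_pow_succ_mul : R =O[atTop] fun r ↦ r ^ (k + 1) * q r := by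
  refine isBigO_of_abs_radialLapl_sub_le (m := m) (V := fun r ↦ 1 - p * g r) hR
    ((contDiff_id.pow _).mul h.contDiff) hR0 (h.tendsto_pow_mul _) ?_ ?_
    (h.eventually_radialLapl_pow_succ_mul_le hg p k) ?_
  · filter_upwards [eventually_gt_atTop 0] with r hr using mul_pos (pow_pos hr _) (h.pos r)
  · have := (h.tendsto_potential.const_mul p).const_sub 1
    exact this.eventually_const_lt (by simp)
  · filter_upwards [eventually_gt_atTop 0] with r hr
    rw [hReq r hr, sub_sub_cancel_left, abs_neg,
      abs_of_nonneg (mul_pos (pow_pos hr k) (h.pos r)).le]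

theorem isBigO_deriv : deriv R =O[atTop] fun r ↦ r ^ (k + 1) * q r := by
  have hRψ := h.isBigO_pow_succ_mul hg hR hR0 hReq
  have hpot : Tendsto (fun r ↦ 1 - p * g r) atTop (𝓝 1) := by
    simpa using (h.tendsto_potential.const_mul p).const_sub 1
  have hsource : (fun r ↦ r ^ k * q r) =O[atTop] fun r ↦ r ^ (k + 1) * q r :=
    (IsBigO.pow_of_le_right (eventually_ge_atTop 1) k.le_succ).mul (isBigO_refl q _)
  have hψle : ∀ᶠ r in atTop,
      radialLapl m (fun s ↦ s ^ (k + 1) * q s) r ≤ 2 * (r ^ (k + 1) * q r) := by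
    filter_upwards [h.eventually_radialLapl_pow_succ_mul_le hg p k, eventually_gt_atTop 0,
      hpot.eventually_le_const one_lt_two] with r hle hr hpot
    have := mul_le_mul_of_nonneg_right hpot (mul_pos (pow_pos hr (k + 1)) (h.pos r)).le
    linarith [mul_pos (pow_pos hr k) (h.pos r)]
  have hRle : radialLapl m R =O[atTop] fun r ↦ r ^ (k + 1) * q r := by
    refine (((hpot.isBigO_one ℝ).mul hRψ).congr_right (by simp) |>.sub hsource).congr' ?_ .rfl
    filter_upwards [eventually_gt_atTop 0] with r hr using (hReq r hr).symm
  refine isBigO_deriv_of_isBigO_radialLapl hR ((contDiff_id.pow _).mul h.contDiff)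
    (h.tendsto_pow_mul _) ?_ (h.isBigO_deriv_pow_succ_mul k) hψle hRψ hRle
  filter_upwards [eventually_gt_atTop 0] with r hr using mul_pos (pow_pos hr _) (h.pos r)

end Inhomogeneous

end IsDecayingProfile

/-! ### Function algebras closed under differentiation -/

section HasDerivsIn

variable {E : Type*} [NormedAddCommGroup E] [NormedSpace ℝ E]

/-- `f` is differentiable at the points of `s`, and there each of its directional derivatives
agrees with a function from `M`. -/
structure HasDerivsIn (M : Set (E → ℝ)) (s : Set E) (f : E → ℝ) : Prop where
  differentiableAt : ∀ x ∈ s, DifferentiableAt ℝ f x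
  exists_fderiv_eq : ∀ v, ∃ d ∈ M, ∀ x ∈ s, fderiv ℝ f x v = d x

theorem HasDerivsIn.of_hasDerivAt {A : Subalgebra ℝ (ℝ → ℝ)} {s : Set ℝ} {f d : ℝ → ℝ}
    (hd : d ∈ A) (hf : ∀ r ∈ s, HasDerivAt f (d r) r) : HasDerivsIn A s f where
  differentiableAt r hr := (hf r hr).differentiableAt
  exists_fderiv_eq v := ⟨v • d, A.smul_mem hd v, fun r hr ↦ by simp [(hf r hr).hasFDerivAt.fderiv]⟩

theorem HasDerivsIn.exists_hasDerivAt {A : Set (ℝ → ℝ)} {s : Set ℝ} {f : ℝ → ℝ}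
    (hf : HasDerivsIn A s f) : ∃ d ∈ A, ∀ r ∈ s, HasDerivAt f (d r) r := by
  obtain ⟨d, hd, hfd⟩ := hf.exists_fderiv_eq 1
  exact ⟨d, hd, fun r hr ↦ by
    simpa [← hfd r hr] using (hf.differentiableAt r hr).hasDerivAt⟩

theorem HasDerivsIn.mul {K L M : Set (E → ℝ)} {s : Set E} {f g : E → ℝ} (hf : HasDerivsIn L s f)
    (hg : HasDerivsIn M s g) (hK : ∀ d ∈ L, ∀ e ∈ M, f * e + d * g ∈ K) :
    HasDerivsIn K s (f * g) where
  differentiableAt x hx := (hf.differentiableAt x hx).mul (hg.differentiableAt x hx)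
  exists_fderiv_eq v := by
    obtain ⟨d, hd, hfd⟩ := hf.exists_fderiv_eq v
    obtain ⟨e, he, hge⟩ := hg.exists_fderiv_eq v
    refine ⟨f * e + d * g, hK d hd e he, fun x hx ↦ ?_⟩
    rw [fderiv_mul (hf.differentiableAt x hx) (hg.differentiableAt x hx)]
    simp [hfd x hx, hge x hx, mul_comm]

theorem hasDerivsIn_of_mem_adjoin {G : Set (E → ℝ)} {s : Set E}
    (hG : ∀ g ∈ G, HasDerivsIn (Algebra.adjoin ℝ G) s g) {f : E → ℝ}
    (hf : f ∈ Algebra.adjoin ℝ G) : HasDerivsIn (Algebra.adjoin ℝ G) s f := by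
  induction hf using Algebra.adjoin_induction with
  | mem g hg => exact hG g hg
  | algebraMap c =>
    exact ⟨fun x _ ↦ differentiableAt_const c,
      fun v ↦ ⟨0, zero_mem _, fun x _ ↦ by simp [Pi.algebraMap_def]⟩⟩
  | add f g _ _ hf' hg' =>
    refine ⟨fun x hx ↦ (hf'.differentiableAt x hx).add (hg'.differentiableAt x hx), fun v ↦ ?_⟩
    obtain ⟨d, hd, hfd⟩ := hf'.exists_fderiv_eq v
    obtain ⟨e, he, hge⟩ := hg'.exists_fderiv_eq v
    refine ⟨d + e, add_mem hd he, fun x hx ↦ ?_⟩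
    rw [fderiv_add (hf'.differentiableAt x hx) (hg'.differentiableAt x hx)]
    simp [hfd x hx, hge x hx]
  | mul f g hf hg hf' hg' =>
    exact hf'.mul hg' fun d hd e he ↦ add_mem (mul_mem hf he) (mul_mem hd hg)

theorem exists_iteratedFDeriv_eqOn {M : Set (E → ℝ)} {s : Set E} (hs : IsOpen s)
    (hM : ∀ g ∈ M, HasDerivsIn M s g) {f g : E → ℝ} (hf : ContDiff ℝ (⊤ : ℕ∞) f) (hg : g ∈ M)
    (hfg : Set.EqOn f g s) (n : ℕ) (v : Fin n → E) :
    ∃ d ∈ M, Set.EqOn (fun x ↦ iteratedFDeriv ℝ n f x v) d s := by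
  induction n with
  | zero => exact ⟨g, hg, fun x hx ↦ by simpa using hfg hx⟩
  | succ n ih =>
    obtain ⟨d, hd, hfd⟩ := ih (Fin.tail v)
    obtain ⟨e, he, hde⟩ := (hM d hd).exists_fderiv_eq (v 0)
    refine ⟨e, he, fun x hx ↦ ?_⟩
    have hdiff : DifferentiableAt ℝ (iteratedFDeriv ℝ n f) x :=
      hf.differentiable_iteratedFDeriv (mod_cast ENat.natCast_lt_top n) x
    calc iteratedFDeriv ℝ (n + 1) f x v
        = fderiv ℝ (fun y ↦ iteratedFDeriv ℝ n f y (Fin.tail v)) x (v 0) := by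
          rw [fderiv_continuousMultilinear_apply_const hdiff, iteratedFDeriv_succ_apply_left]
          rfl
      _ = e x := by rw [(hfd.eventuallyEq_of_mem (hs.mem_nhds hx)).fderiv_eq, hde x hx]

theorem hasDerivsIn_span_singleton {A : Subalgebra ℝ (E → ℝ)} {s : Set E} {Q : E → ℝ}
    (hA : ∀ P ∈ A, HasDerivsIn A s P) (hQ : HasDerivsIn (Submodule.span A {Q}) s Q) {f : E → ℝ}
    (hf : f ∈ Submodule.span A {Q}) : HasDerivsIn (Submodule.span A {Q}) s f := by
  obtain ⟨P, rfl⟩ := Submodule.mem_span_singleton.1 hf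
  exact (hA P P.2).mul hQ fun d hd e he ↦ add_mem (Submodule.smul_mem _ P he)
    (Submodule.smul_mem _ (⟨d, hd⟩ : A) (Submodule.mem_span_singleton_self Q))

end HasDerivsIn

section GrowthAlgebra

variable {X : Type*}

/-- The functions bounded along the filter `l` by a power of `1 + |w|`. The weight `w = 0` gives
the bounded functions. -/
def growthAlgebra (l : Filter X) (w : X → ℝ) : Subalgebra ℝ (X → ℝ) where
  carrier := {f | ∃ k : ℕ, f =O[l] fun x ↦ (1 + |w x|) ^ k}
  algebraMap_mem' c := ⟨0, by simpa using isBigO_const_const c (one_ne_zero (α := ℝ)) l⟩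
  mul_mem' := by
    rintro f g ⟨j, hf⟩ ⟨k, hg⟩
    exact ⟨j + k, (hf.mul hg).congr_right fun x ↦ (pow_add _ j k).symm⟩
  add_mem' := by
    rintro f g ⟨j, hf⟩ ⟨k, hg⟩
    have hmono {i : ℕ} (hi : i ≤ max j k) :
        (fun x ↦ (1 + |w x|) ^ i) =O[l] fun x ↦ (1 + |w x|) ^ max j k :=
      IsBigO.pow_of_le_right (.of_forall fun x ↦ le_add_of_nonneg_right (abs_nonneg _)) hi
    exact ⟨max j k, (hf.trans (hmono (le_max_left j k))).add (hg.trans (hmono (le_max_right j k)))⟩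

theorem mem_growthAlgebra {l : Filter X} {w f : X → ℝ} :
    f ∈ growthAlgebra l w ↔ ∃ k : ℕ, f =O[l] fun x ↦ (1 + |w x|) ^ k :=
  .rfl

theorem mem_growthAlgebra_of_isBigO_one {l : Filter X} {w f : X → ℝ}
    (hf : f =O[l] fun _ ↦ (1 : ℝ)) : f ∈ growthAlgebra l w :=
  ⟨0, by simpa using hf⟩

theorem comp_mem_growthAlgebra {Y : Type*} {l : Filter X} {l' : Filter Y} {w f : X → ℝ} {φ : Y → X}
    (hf : f ∈ growthAlgebra l w) (hφ : Tendsto φ l' l) :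
    f ∘ φ ∈ growthAlgebra l' (w ∘ φ) :=
  hf.imp fun _ hk ↦ hk.comp_tendsto hφ

theorem isBigO_top_of_cocompact [TopologicalSpace X] {f w : X → ℝ} (hf : Continuous f)
    (hw : Continuous w) (hw0 : ∀ x, w x ≠ 0) (h : f =O[cocompact X] w) : f =O[⊤] w := by
  obtain ⟨C, hC⟩ := h.bound
  obtain ⟨K, hK, hKC⟩ := mem_cocompact.1 hC
  have hquot : (fun x ↦ f x / w x) =O[𝓟 K] fun _ ↦ (1 : ℝ) :=
    (hf.div hw hw0).continuousOn.isBigO_principal hK (by simp)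
  have hcompact : f =O[𝓟 K] w :=
    (hquot.mul (isBigO_refl w _)).congr (fun x ↦ div_mul_cancel₀ _ (hw0 x)) fun x ↦ one_mul _
  have hcompl : f =O[𝓟 Kᶜ] w := isBigO_principal.2 ⟨C, hKC⟩
  simpa using hcompact.sup hcompl

end GrowthAlgebra

/-! ### Polar coordinates -/

section Polar

variable {E : Type*} [NormedAddCommGroup E] [InnerProductSpace ℝ E]

/-- The component along `v` of the direction `x / ‖x‖` of `x`; it is `0` at the origin. -/
def angular (v x : E) : ℝ :=
  inner ℝ v x * ‖x‖⁻¹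

theorem abs_angular_le (v x : E) : |angular v x| ≤ ‖v‖ := by
  rw [angular, abs_mul, abs_inv, abs_norm, ← div_eq_mul_inv]
  exact div_le_of_le_mul₀ (norm_nonneg x) (norm_nonneg v) (abs_real_inner_le_norm v x)

theorem hasFDerivAt_norm {x : E} (hx : x ≠ 0) :
    HasFDerivAt (fun y : E ↦ ‖y‖) (‖x‖⁻¹ • innerSL ℝ x) x := by
  have hsqrt :=
    (hasStrictFDerivAt_norm_sq x).hasFDerivAt.sqrt (pow_ne_zero 2 (norm_ne_zero_iff.2 hx))
  simp only [Real.sqrt_sq (norm_nonneg _)] at hsqrt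
  refine hsqrt.congr_fderiv ?_
  ext v
  simp only [one_div, mul_inv_rev, smul_apply, coe_innerSL_apply, nsmul_eq_mul, Nat.cast_ofNat,
    smul_eq_mul]
  field_simp

theorem hasFDerivAt_comp_norm {F : ℝ → ℝ} {F' : ℝ} {x : E} (hx : x ≠ 0)
    (hF : HasDerivAt F F' ‖x‖) :
    HasFDerivAt (fun y : E ↦ F ‖y‖) (F' • ‖x‖⁻¹ • innerSL ℝ x) x :=
  hF.comp_hasFDerivAt x (hasFDerivAt_norm hx)

theorem fderiv_comp_norm_apply {F : ℝ → ℝ} {F' : ℝ} {x : E} (hx : x ≠ 0)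
    (hF : HasDerivAt F F' ‖x‖) (v : E) :
    fderiv ℝ (fun y : E ↦ F ‖y‖) x v = F' * angular v x := by
  rw [(hasFDerivAt_comp_norm hx hF).fderiv, angular, real_inner_comm]
  simp [mul_comm]

theorem differentiableAt_angular (v : E) {x : E} (hx : x ≠ 0) :
    DifferentiableAt ℝ (angular v) x :=
  (innerSL ℝ v).differentiableAt.mul
    (hasFDerivAt_comp_norm hx (hasDerivAt_inv (norm_ne_zero_iff.2 hx))).differentiableAt

theorem fderiv_angular_apply (v w : E) {x : E} (hx : x ≠ 0) :
    fderiv ℝ (angular v) x w = (inner ℝ v w - angular v x * angular w x) * ‖x‖⁻¹ := by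
  have hinv := hasFDerivAt_comp_norm hx (hasDerivAt_inv (norm_ne_zero_iff.2 hx))
  have hd : HasFDerivAt (angular v) _ x := (innerSL ℝ v).hasFDerivAt.mul hinv
  rw [hd.fderiv]
  simp only [coe_innerSL_apply, neg_smul, smul_neg, add_apply, neg_apply, smul_apply,
    real_inner_comm, smul_eq_mul, angular]
  ring

/-- The algebra generated by the angular functions and the functions `F ‖x‖` with `F ∈ B`. -/
def polarAlgebra (E : Type*) [NormedAddCommGroup E] [InnerProductSpace ℝ E]
    (B : Subalgebra ℝ (ℝ → ℝ)) : Subalgebra ℝ (E → ℝ) :=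
  Algebra.adjoin ℝ (Set.range angular ∪ (fun F x ↦ F ‖x‖) '' (B : Set (ℝ → ℝ)))

variable {B : Subalgebra ℝ (ℝ → ℝ)}

theorem angular_mem_polarAlgebra (v : E) : angular v ∈ polarAlgebra E B :=
  Algebra.subset_adjoin (.inl ⟨v, rfl⟩)

theorem comp_norm_mem_polarAlgebra {F : ℝ → ℝ} (hF : F ∈ B) :
    (fun x ↦ F ‖x‖) ∈ polarAlgebra E B :=
  Algebra.subset_adjoin (.inr ⟨F, hF, rfl⟩)

theorem hasDerivsIn_polarAlgebra (hinv : (fun r ↦ r⁻¹) ∈ B)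
    (hB : ∀ F ∈ B, HasDerivsIn B (Set.Ioi 0) F) :
    ∀ f ∈ polarAlgebra E B, HasDerivsIn (polarAlgebra E B) {0}ᶜ f := by
  refine fun f hf ↦ hasDerivsIn_of_mem_adjoin (fun g hg ↦ ?_) hf
  rcases hg with ⟨v, rfl⟩ | ⟨F, hF, rfl⟩
  · exact ⟨fun x hx ↦ differentiableAt_angular v hx, fun w ↦
      ⟨(algebraMap ℝ _ (inner ℝ v w) - angular v * angular w) * fun x ↦ ‖x‖⁻¹,
        mul_mem (sub_mem (algebraMap_mem _ _)
          (mul_mem (angular_mem_polarAlgebra v) (angular_mem_polarAlgebra w)))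
          (comp_norm_mem_polarAlgebra hinv),
        fun x hx ↦ fderiv_angular_apply v w hx⟩⟩
  · obtain ⟨F', hF', hd⟩ := (hB F hF).exists_hasDerivAt
    have hd' (x : E) (hx : x ≠ 0) : HasDerivAt F (F' ‖x‖) ‖x‖ := hd _ (norm_pos_iff.2 hx)
    exact ⟨fun x hx ↦ (hasFDerivAt_comp_norm hx (hd' x hx)).differentiableAt, fun v ↦
      ⟨(fun x ↦ F' ‖x‖) * angular v,
        mul_mem (comp_norm_mem_polarAlgebra hF') (angular_mem_polarAlgebra v),
        fun x hx ↦ fderiv_comp_norm_apply hx (hd' x hx) v⟩⟩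

theorem polarAlgebra_le_growthAlgebra {w : ℝ → ℝ} (hB : B ≤ growthAlgebra atTop w) :
    polarAlgebra E B ≤ growthAlgebra (Bornology.cobounded E) fun x ↦ w ‖x‖ := by
  refine Algebra.adjoin_le ?_
  rintro _ (⟨v, rfl⟩ | ⟨F, hF, rfl⟩)
  · exact mem_growthAlgebra_of_isBigO_one
      (.of_bound ‖v‖ (.of_forall fun x ↦ by simpa using abs_angular_le v x))
  · exact comp_mem_growthAlgebra (hB hF) tendsto_norm_cobounded_atTop

theorem hasDerivsIn_span_polarAlgebra {q : ℝ → ℝ} (hq : Differentiable ℝ q) (hpos : ∀ r, 0 < q r)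
    (hlog : logDeriv q ∈ B) :
    HasDerivsIn (Submodule.span (polarAlgebra E B) {fun x : E ↦ q ‖x‖}) ({0}ᶜ : Set E)
      fun x ↦ q ‖x‖ := by
  refine ⟨fun x hx ↦ (hasFDerivAt_comp_norm hx (hq _).hasDerivAt).differentiableAt, fun v ↦
    ⟨_, Submodule.mem_span_singleton.2 ⟨⟨_, mul_mem (comp_norm_mem_polarAlgebra hlog)
      (angular_mem_polarAlgebra v)⟩, rfl⟩, fun x hx ↦ ?_⟩⟩
  have := (hpos ‖x‖).ne'
  rw [fderiv_comp_norm_apply hx (hq _).hasDerivAt]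
  simp only [Subalgebra.smul_def, smul_eq_mul, Pi.mul_apply, logDeriv_apply]
  field_simp

theorem exists_abs_iteratedFDeriv_le [ProperSpace E] {w : ℝ → ℝ} (hw : Continuous w)
    (hinv : (fun r ↦ r⁻¹) ∈ B) (hB : ∀ F ∈ B, HasDerivsIn B (Set.Ioi 0) F)
    (hBw : B ≤ growthAlgebra atTop w) {q : ℝ → ℝ} (hq : Differentiable ℝ q)
    (hpos : ∀ r, 0 < q r) (hlog : logDeriv q ∈ B) {f : E → ℝ} (hf : ContDiff ℝ (⊤ : ℕ∞) f)
    {F : ℝ → ℝ} (hF : F ∈ B) (hfF : ∀ x, x ≠ 0 → f x = F ‖x‖ * q ‖x‖) (n : ℕ) (v : Fin n → E) :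
    ∃ C : ℝ, ∃ k : ℕ, 0 < C ∧ ∀ x,
      |iteratedFDeriv ℝ n f x v| ≤ C * (1 + |w ‖x‖|) ^ k * q ‖x‖ := by
  obtain ⟨d, hd, hfd⟩ := exists_iteratedFDeriv_eqOn isOpen_compl_singleton
    (fun g hg ↦ hasDerivsIn_span_singleton (hasDerivsIn_polarAlgebra hinv hB)
      (hasDerivsIn_span_polarAlgebra hq hpos hlog) hg) hf
    (Submodule.mem_span_singleton.2 ⟨⟨_, comp_norm_mem_polarAlgebra hF⟩, rfl⟩) hfF n v
  obtain ⟨P, rfl⟩ := Submodule.mem_span_singleton.1 hd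
  obtain ⟨k, hk⟩ := mem_growthAlgebra.1 (polarAlgebra_le_growthAlgebra hBw P.2)
  have hbound_pos (x : E) : 0 < (1 + |w ‖x‖|) ^ k * q ‖x‖ := mul_pos (by positivity) (hpos _)
  have hcobounded : (fun x ↦ iteratedFDeriv ℝ n f x v)
      =O[Bornology.cobounded E] fun x ↦ (1 + |w ‖x‖|) ^ k * q ‖x‖ := by
    refine (hk.mul (isBigO_refl (fun x ↦ q ‖x‖) _)).congr' ?_ .rfl
    have hzero : Bornology.IsBounded {(0 : E)} := Bornology.isBounded_singleton
    filter_upwards [hzero.compl] with x hx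
    exact (hfd hx).symm
  have hcont : Continuous fun x ↦ iteratedFDeriv ℝ n f x v :=
    (ContinuousMultilinearMap.apply ℝ (fun _ ↦ E) ℝ v).continuous.comp
      (hf.continuous_iteratedFDeriv (mod_cast le_top))
  have hbound_cont : Continuous fun x : E ↦ (1 + |w ‖x‖|) ^ k * q ‖x‖ := by
    have := hq.continuous
    fun_prop
  rw [Metric.cobounded_eq_cocompact] at hcobounded
  obtain ⟨C, hC, hbound⟩ := (isBigO_top_of_cocompact hcont hbound_cont
    (fun x ↦ (hbound_pos x).ne') hcobounded).exists_pos
  refine ⟨C, k, hC, fun x ↦ ?_⟩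
  have := (isBigOWith_top.1 hbound) x
  rwa [Real.norm_eq_abs, Real.norm_of_nonneg (hbound_pos x).le, ← mul_assoc] at this

end Polar

section Radial

/-- The function `f` depends only on the norm of its argument. -/
def IsRadial {E : Type*} [Norm E] (f : E → ℝ) : Prop :=
  ∀ x y, ‖x‖ = ‖y‖ → f x = f y

/-- The restriction of `f` to the line spanned by `e`; for radial `f` and a unit vector `e` it is
the radial profile of `f`, extended evenly to negative radii. -/
def profile {E : Type*} [SMul ℝ E] (f : E → ℝ) (e : E) (r : ℝ) : ℝ :=
  f (r • e)

variable {E : Type*} [NormedAddCommGroup E] [NormedSpace ℝ E] {f : E → ℝ} {e : E}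

theorem IsRadial.profile_norm (hf : IsRadial f) (he : ‖e‖ = 1) (x : E) :
    profile f e ‖x‖ = f x :=
  hf _ _ (by simp [norm_smul, he])

theorem contDiff_profile {n : WithTop ℕ∞} (hf : ContDiff ℝ n f) (e : E) :
    ContDiff ℝ n (profile f e) :=
  hf.comp (contDiff_id.smul contDiff_const)

theorem tendsto_profile (hf : Tendsto f (Bornology.cobounded E) (𝓝 0)) (he : ‖e‖ = 1) :
    Tendsto (profile f e) atTop (𝓝 0) := by
  refine hf.comp (tendsto_norm_atTop_iff_cobounded.1 ?_)
  simpa [norm_smul, he] using tendsto_abs_atTop_atTop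

variable {N : ℕ}

theorem sum_angular_single_sq {x : EuclideanSpace ℝ (Fin N)} (hx : x ≠ 0) :
    ∑ i, angular (EuclideanSpace.single i (1 : ℝ)) x ^ 2 = 1 := by
  simp only [angular, mul_pow, ← Finset.sum_mul, EuclideanSpace.inner_single_left, map_one, one_mul,
    ← EuclideanSpace.real_norm_sq_eq]
  field_simp

theorem lapl_comp_norm {φ : ℝ → ℝ} (hφ : ContDiff ℝ 2 φ) {x : EuclideanSpace ℝ (Fin N)}
    (hx : x ≠ 0) : lapl (fun y ↦ φ ‖y‖) x = radialLapl (N - 1) φ ‖x‖ := by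
  have hφ1 (r : ℝ) := (hφ.differentiable two_ne_zero r).hasDerivAt
  have hφ2 (r : ℝ) := (hφ.differentiable_deriv_two r).hasDerivAt
  have hsecond (v : EuclideanSpace ℝ (Fin N)) :
      fderiv ℝ (fun y ↦ fderiv ℝ (fun y ↦ φ ‖y‖) y v) x v =
        deriv (deriv φ) ‖x‖ * angular v x ^ 2 +
          deriv φ ‖x‖ * ((inner ℝ v v - angular v x ^ 2) * ‖x‖⁻¹) := by
    have hfirst : (fun y ↦ fderiv ℝ (fun y ↦ φ ‖y‖) y v) =ᶠ[𝓝 x]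
        fun y ↦ deriv φ ‖y‖ * angular v y := by
      filter_upwards [isOpen_ne.mem_nhds hx] with y hy using fderiv_comp_norm_apply hy (hφ1 _) v
    rw [hfirst.fderiv_eq, fderiv_fun_mul (hasFDerivAt_comp_norm hx (hφ2 _)).differentiableAt
      (differentiableAt_angular v hx)]
    simp only [add_apply, smul_apply, smul_eq_mul, fderiv_angular_apply v v hx,
      fderiv_comp_norm_apply hx (hφ2 _)]
    ring
  simp only [lapl, hsecond, Finset.sum_add_distrib, ← Finset.mul_sum, ← Finset.sum_mul,
    Finset.sum_sub_distrib, sum_angular_single_sq hx, radialLapl]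
  simp only [inner_self_eq_norm_sq_to_K, PiLp.norm_single, norm_one, Real.ringHom_apply, one_pow,
    Finset.sum_const, Finset.card_univ, Fintype.card_fin, nsmul_eq_mul, mul_one]
  field_simp

theorem IsRadial.lapl_eq {f : EuclideanSpace ℝ (Fin N) → ℝ} (hf : IsRadial f)
    (hsmooth : ContDiff ℝ 2 f) {e : EuclideanSpace ℝ (Fin N)} (he : ‖e‖ = 1) {r : ℝ} (hr : 0 < r) :
    lapl f (r • e) = radialLapl (N - 1) (profile f e) r := by
  have hnorm : ‖r • e‖ = r := by simp [norm_smul, he, hr.le]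
  have hne : r • e ≠ 0 := norm_pos_iff.1 (by rwa [hnorm])
  have hf_eq : f = fun y ↦ profile f e ‖y‖ := funext fun y ↦ (hf.profile_norm he y).symm
  rw [show lapl f (r • e) = lapl (fun y ↦ profile f e ‖y‖) (r • e) from congrArg (lapl · _) hf_eq,
    lapl_comp_norm (contDiff_profile hsmooth e) hne, hnorm]

end Radial

/-! ### Coefficient algebras of the radial equations -/

theorem hasDerivsIn_inv {A : Subalgebra ℝ (ℝ → ℝ)} (hinv : (fun r ↦ r⁻¹) ∈ A) :
    HasDerivsIn A (Set.Ioi 0) fun r ↦ r⁻¹ :=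
  .of_hasDerivAt (neg_mem (mul_mem hinv hinv)) fun r hr ↦
    (hasDerivAt_inv (ne_of_gt hr)).congr_deriv (by simp [sq])

/-- The algebra generated by `S` together with the coefficients `1 / r`, `q' / q` and `g` of the
radial equation of a decaying profile `q` with potential `g`. -/
def coeffAlgebra (g q : ℝ → ℝ) (S : Set (ℝ → ℝ)) : Subalgebra ℝ (ℝ → ℝ) :=
  Algebra.adjoin ℝ ({fun r ↦ r⁻¹, logDeriv q, g} ∪ S)

section CoeffAlgebra

variable {g q : ℝ → ℝ} {S : Set (ℝ → ℝ)}

theorem inv_mem_coeffAlgebra : (fun r ↦ r⁻¹) ∈ coeffAlgebra g q S :=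
  Algebra.subset_adjoin (by simp)

theorem logDeriv_mem_coeffAlgebra : logDeriv q ∈ coeffAlgebra g q S :=
  Algebra.subset_adjoin (by simp)

theorem potential_mem_coeffAlgebra : g ∈ coeffAlgebra g q S :=
  Algebra.subset_adjoin (by simp)

theorem subset_coeffAlgebra : S ⊆ coeffAlgebra g q S :=
  Set.subset_union_right.trans Algebra.subset_adjoin

end CoeffAlgebra

namespace IsDecayingProfile

variable {m α : ℝ} {g q : ℝ → ℝ} {S : Set (ℝ → ℝ)} (h : IsDecayingProfile m g q)
include h

theorem hasDerivAt_div {u : ℝ → ℝ} {u' r : ℝ} (hu : HasDerivAt u u' r) :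
    HasDerivAt (u / q) (u' / q r - u r / q r * logDeriv q r) r := by
  refine (hu.div (h.differentiable r).hasDerivAt (h.pos r).ne').congr_deriv ?_
  have := (h.pos r).ne'
  rw [logDeriv_apply]
  field_simp

theorem hasDerivAt_rpow (α r : ℝ) :
    HasDerivAt (fun s ↦ q s ^ α) (α * (q r ^ α * logDeriv q r)) r := by
  refine ((h.differentiable r).hasDerivAt.rpow_const (.inl (h.pos r).ne')).congr_deriv ?_
  rw [logDeriv_apply, Real.rpow_sub_one (h.pos r).ne']
  ring

theorem hasDerivAt_logDeriv {r : ℝ} (hr : 0 < r) :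
    HasDerivAt (logDeriv q)
      (1 - g r - m * (r⁻¹ * logDeriv q r) - logDeriv q r * logDeriv q r) r := by
  refine (h.hasDerivAt_div (h.contDiff.differentiable_deriv_two r).hasDerivAt).congr_deriv ?_
  have heq := h.radialLapl_eq r hr
  have := (h.pos r).ne'
  rw [radialLapl] at heq
  rw [eq_sub_of_add_eq heq, logDeriv_apply]
  field_simp

theorem hasDerivsIn_coeffAlgebra
    (hg : ∀ r, 0 < r → HasDerivAt g (α * (g r * logDeriv q r)) r)
    (hS : ∀ F ∈ S, HasDerivsIn (coeffAlgebra g q S) (Set.Ioi 0) F) :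
    ∀ F ∈ coeffAlgebra g q S, HasDerivsIn (coeffAlgebra g q S) (Set.Ioi 0) F := by
  have hinv := inv_mem_coeffAlgebra (g := g) (q := q) (S := S)
  have hlog := logDeriv_mem_coeffAlgebra (g := g) (q := q) (S := S)
  have hpot := potential_mem_coeffAlgebra (g := g) (q := q) (S := S)
  refine fun F hF ↦ hasDerivsIn_of_mem_adjoin (fun G hG ↦ ?_) hF
  rcases hG with (rfl | rfl | rfl) | hG
  · exact hasDerivsIn_inv hinv
  · exact .of_hasDerivAt (sub_mem (sub_mem (sub_mem (one_mem _) hpot)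
      (Subalgebra.smul_mem _ (mul_mem hinv hlog) m)) (mul_mem hlog hlog))
      fun r hr ↦ h.hasDerivAt_logDeriv hr
  · exact .of_hasDerivAt (Subalgebra.smul_mem _ (mul_mem hpot hlog) α) hg
  · exact hS G hG

theorem coeffAlgebra_le_growthAlgebra {w : ℝ → ℝ} (hS : S ⊆ growthAlgebra atTop w) :
    coeffAlgebra g q S ≤ growthAlgebra atTop w := by
  refine Algebra.adjoin_le (Set.union_subset ?_ hS)
  rintro F (rfl | rfl | rfl) <;> refine mem_growthAlgebra_of_isBigO_one ?_
  · exact tendsto_inv_atTop_zero.isBigO_one ℝ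
  · exact h.tendsto_logDeriv.isBigO_one ℝ
  · exact h.tendsto_potential.isBigO_one ℝ

theorem div_mem_growthAlgebra {u : ℝ → ℝ} {k : ℕ} (hu : u =O[atTop] fun r ↦ r ^ k * q r) :
    u / q ∈ growthAlgebra atTop id := by
  have hpow : (fun r : ℝ ↦ r ^ k) =O[atTop] fun r ↦ (1 + |r|) ^ k :=
    .of_bound' <| .of_forall fun r ↦ by
      rw [norm_pow, Real.norm_eq_abs, Real.norm_of_nonneg (by positivity)]
      exact pow_le_pow_left₀ (abs_nonneg r) (by linarith) k
  refine mem_growthAlgebra.2 ⟨k, .trans ?_ hpow⟩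
  refine (hu.mul (isBigO_refl (fun r ↦ (q r)⁻¹) atTop)).congr (fun r ↦ (div_eq_mul_inv _ _).symm)
    fun r ↦ ?_
  rw [mul_inv_cancel_right₀ (h.pos r).ne']

section Inhomogeneous

variable {p : ℝ} {k : ℕ} {R : ℝ → ℝ} (hR : ContDiff ℝ 2 R)
  (hReq : ∀ r, 0 < r → radialLapl m R r = (1 - p * g r) * R r - r ^ k * q r)
include hR hReq

theorem hasDerivAt_deriv_div {r : ℝ} (hr : 0 < r) :
    HasDerivAt (deriv R / q) ((1 - p * g r) * (R r / q r) - r ^ k -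
      m * (r⁻¹ * (deriv R r / q r)) - deriv R r / q r * logDeriv q r) r := by
  refine (h.hasDerivAt_div (hR.differentiable_deriv_two r).hasDerivAt).congr_deriv ?_
  have heq := hReq r hr
  have := (h.pos r).ne'
  rw [radialLapl] at heq
  rw [eq_sub_of_add_eq heq]
  field_simp

theorem hasDerivsIn_coeffAlgebra_inhomogeneous
    (hg : ∀ r, 0 < r → HasDerivAt g (α * (g r * logDeriv q r)) r) :
    ∀ F ∈ coeffAlgebra g q {id, R / q, deriv R / q},
      HasDerivsIn (coeffAlgebra g q {id, R / q, deriv R / q}) (Set.Ioi 0) F := by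
  set A := coeffAlgebra g q {id, R / q, deriv R / q}
  have hinv : (fun r ↦ r⁻¹) ∈ A := inv_mem_coeffAlgebra
  have hlog : logDeriv q ∈ A := logDeriv_mem_coeffAlgebra
  have hpot : g ∈ A := potential_mem_coeffAlgebra
  have hid : id ∈ A := subset_coeffAlgebra (by simp)
  have hσ : R / q ∈ A := subset_coeffAlgebra (by simp)
  have hτ : deriv R / q ∈ A := subset_coeffAlgebra (by simp)
  refine h.hasDerivsIn_coeffAlgebra hg ?_
  rintro F (rfl | rfl | rfl)
  · exact .of_hasDerivAt (one_mem _) fun r _ ↦ hasDerivAt_id r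
  · exact .of_hasDerivAt (sub_mem hτ (mul_mem hσ hlog)) fun r _ ↦
      h.hasDerivAt_div (hR.differentiable two_ne_zero r).hasDerivAt
  · exact .of_hasDerivAt (sub_mem (sub_mem (sub_mem
      (mul_mem (sub_mem (one_mem _) (Subalgebra.smul_mem _ hpot p)) hσ) (pow_mem hid k))
      (Subalgebra.smul_mem _ (mul_mem hinv hτ) m)) (mul_mem hτ hlog))
      fun r hr ↦ h.hasDerivAt_deriv_div hR hReq hr

theorem coeffAlgebra_inhomogeneous_le_growthAlgebra
    (hg : Tendsto (fun r ↦ r * g r) atTop (𝓝 0)) (hR0 : Tendsto R atTop (𝓝 0)) :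
    coeffAlgebra g q {id, R / q, deriv R / q} ≤ growthAlgebra atTop id := by
  refine h.coeffAlgebra_le_growthAlgebra ?_
  rintro F (rfl | rfl | rfl)
  · exact mem_growthAlgebra.2 ⟨1, .of_bound' (.of_forall fun r ↦ by
      simpa using (le_add_of_nonneg_left zero_le_one).trans (le_abs_self _))⟩
  · exact h.div_mem_growthAlgebra (h.isBigO_pow_succ_mul hg hR hR0 hReq)
  · exact h.div_mem_growthAlgebra (h.isBigO_deriv hg hR hR0 hReq)

end Inhomogeneous

end IsDecayingProfile

/-! ### Bounds by the ground state -/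

section GroundState

variable {N : ℕ} {α : ℝ} {Q : EuclideanSpace ℝ (Fin N) → ℝ} {e : EuclideanSpace ℝ (Fin N)}

theorem isDecayingProfile_profile (hα : 0 < α) (hsmooth : ContDiff ℝ 2 Q) (hpos : ∀ x, 0 < Q x)
    (hrad : IsRadial Q) (hlim : Tendsto Q (Bornology.cobounded _) (𝓝 0))
    (heq : ∀ x, lapl Q x - Q x + Q x ^ (1 + α) = 0) (he : ‖e‖ = 1) :
    IsDecayingProfile (N - 1) (fun r ↦ profile Q e r ^ α) (profile Q e) where
  contDiff := contDiff_profile hsmooth e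
  pos r := hpos _
  tendsto_zero := tendsto_profile hlim he
  tendsto_potential := by
    simpa [hα.ne'] using (tendsto_profile hlim he).rpow_const (.inr hα.le)
  radialLapl_eq r hr := by
    have := heq (r • e)
    rw [hrad.lapl_eq hsmooth he hr, Real.rpow_add (hpos _), Real.rpow_one] at this
    rw [profile, sub_mul, mul_comm (_ ^ α)]
    linarith

theorem radialLapl_profile_eq {p : ℝ} {k : ℕ} {ρ : EuclideanSpace ℝ (Fin N) → ℝ}
    (hsmooth : ContDiff ℝ 2 ρ) (hrad : IsRadial ρ)
    (heq : ∀ x, -lapl ρ x + ρ x - p * Q x ^ α * ρ x = ‖x‖ ^ k * Q x) (he : ‖e‖ = 1) {r : ℝ}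
    (hr : 0 < r) : radialLapl (N - 1) (profile ρ e) r =
      (1 - p * profile Q e r ^ α) * profile ρ e r - r ^ k * profile Q e r := by
  have := heq (r • e)
  rw [hrad.lapl_eq hsmooth he hr, norm_smul, he, mul_one, Real.norm_of_nonneg hr.le] at this
  unfold profile at this ⊢
  linarith

end GroundState

theorem derivative_bounds_general {N k : ℕ} (hN : 1 ≤ N) {α p : ℝ} (hα : 0 < α)
    {Q ρ : EuclideanSpace ℝ (Fin N) → ℝ} (hQsmooth : ContDiff ℝ (⊤ : ℕ∞) Q)
    (hQpos : ∀ x, 0 < Q x) (hQrad : IsRadial Q) (hQlim : Tendsto Q (Bornology.cobounded _) (𝓝 0))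
    (hQ : ∀ x, lapl Q x - Q x + Q x ^ (1 + α) = 0) (hρsmooth : ContDiff ℝ (⊤ : ℕ∞) ρ)
    (hρrad : IsRadial ρ) (hρlim : Tendsto ρ (Bornology.cobounded _) (𝓝 0))
    (hρ : ∀ x, -lapl ρ x + ρ x - p * Q x ^ α * ρ x = ‖x‖ ^ k * Q x) :
    (∀ (n : ℕ) (v : Fin n → EuclideanSpace ℝ (Fin N)), ∃ C : ℝ, 0 < C ∧ ∀ x,
        |iteratedFDeriv ℝ n Q x v| ≤ C * Q x) ∧
    (∀ (n : ℕ) (v : Fin n → EuclideanSpace ℝ (Fin N)), ∃ C κ : ℝ, 0 < C ∧ 0 < κ ∧ ∀ x,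
        |iteratedFDeriv ℝ n ρ x v| ≤ C * (1 + ‖x‖) ^ κ * Q x) := by
  obtain ⟨e, he⟩ : ∃ e : EuclideanSpace ℝ (Fin N), ‖e‖ = 1 :=
    ⟨EuclideanSpace.single ⟨0, hN⟩ 1, by simp⟩
  have hQ2 : ContDiff ℝ 2 Q := mod_cast contDiff_infty.1 hQsmooth 2
  have hρ2 : ContDiff ℝ 2 ρ := mod_cast contDiff_infty.1 hρsmooth 2
  have h := isDecayingProfile_profile hα hQ2 hQpos hQrad hQlim hQ he
  have hQ_eq (x : EuclideanSpace ℝ (Fin N)) := hQrad.profile_norm he x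
  have hpot : Tendsto (fun r ↦ r * profile Q e r ^ α) atTop (𝓝 0) := by
    simpa using h.tendsto_pow_mul_rpow 1 hα
  have hpot' (r : ℝ) (_ : 0 < r) := h.hasDerivAt_rpow α r
  have hR0 := tendsto_profile hρlim he
  have hR2 := contDiff_profile hρ2 e
  have hReq (r : ℝ) (hr : 0 < r) := radialLapl_profile_eq hρ2 hρrad hρ he hr
  refine ⟨fun n v ↦ ?_, fun n v ↦ ?_⟩
  · obtain ⟨C, j, hC, hbound⟩ := exists_abs_iteratedFDeriv_le (w := 0) (F := 1) continuous_zero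
      inv_mem_coeffAlgebra (h.hasDerivsIn_coeffAlgebra (S := ∅) hpot' (by simp))
      (h.coeffAlgebra_le_growthAlgebra (by simp)) h.differentiable h.pos logDeriv_mem_coeffAlgebra
      hQsmooth (one_mem _) (by simp [hQ_eq]) n v
    exact ⟨C, hC, by simpa [hQ_eq] using hbound⟩
  · obtain ⟨C, j, hC, hbound⟩ := exists_abs_iteratedFDeriv_le (F := profile ρ e / profile Q e)
      continuous_id inv_mem_coeffAlgebra (h.hasDerivsIn_coeffAlgebra_inhomogeneous hR2 hReq hpot')
      (h.coeffAlgebra_inhomogeneous_le_growthAlgebra hR2 hReq hpot hR0) h.differentiable h.pos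
      logDeriv_mem_coeffAlgebra hρsmooth (subset_coeffAlgebra (by simp))
      (fun x _ ↦ by simp [(h.pos _).ne', hρrad.profile_norm he]) n v
    refine ⟨C, j + 1, hC, by positivity, fun x ↦ (hbound x).trans ?_⟩
    rw [id, abs_norm, hQ_eq, ← Nat.cast_succ, Real.rpow_natCast]
    have := hQpos x
    gcongr
    · linarith [norm_nonneg x]
    · simp

theorem IsGroundState.tendsto_zero {N : ℕ} {Q : EuclideanSpace ℝ (Fin N) → ℝ}
    (hQ : IsGroundState N Q) : Tendsto Q (Bornology.cobounded _) (𝓝 0) := by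
  obtain ⟨-, hpos, -, -, C, c, -, hc, hle⟩ := hQ
  refine squeeze_zero (fun x ↦ (hpos x).le) hle ?_
  have hexp : Tendsto (fun x : EuclideanSpace ℝ (Fin N) ↦ -c * ‖x‖) (Bornology.cobounded _) atBot :=
    tendsto_norm_cobounded_atTop.const_mul_atTop_of_neg (neg_neg_of_pos hc)
  simpa using (Real.tendsto_exp_atBot.comp hexp).const_mul C

/-- derivative bounds `|∂^a Q| ≤ C_a Q` and
`|∂^a ρ| ≤ C_a (1+|x|)^{κ_a} Q`, where `ρ` is the radial Schwartz solution of `L₊ρ = |x|²Q`.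
Multi-index derivatives are expressed as iterated derivatives in coordinate directions. -/
theorem derivative_bounds (N : ℕ) (hN : 1 ≤ N) (Q : EuclideanSpace ℝ (Fin N) → ℝ)
    (hQ : IsGroundState N Q) (ρ : SchwartzMap (EuclideanSpace ℝ (Fin N)) ℝ)
    (hρrad : ∀ x y, ‖x‖ = ‖y‖ → ρ x = ρ y)
    (hρ : ∀ x, -lapl (⇑ρ) x + ρ x - (1 + 4 / N) * Q x ^ ((4:ℝ) / N) * ρ x = ‖x‖ ^ 2 * Q x) :
    (∀ (n : ℕ) (v : Fin n → Fin N), ∃ C : ℝ, 0 < C ∧ ∀ x,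
        |iteratedFDeriv ℝ n Q x (fun k => EuclideanSpace.single (v k) (1:ℝ))| ≤ C * Q x) ∧
    (∀ (n : ℕ) (v : Fin n → Fin N), ∃ C κ : ℝ, 0 < C ∧ 0 < κ ∧ ∀ x,
        |iteratedFDeriv ℝ n (⇑ρ) x (fun k => EuclideanSpace.single (v k) (1:ℝ))|
          ≤ C * (1 + ‖x‖) ^ κ * Q x) := by
  have hα : (0 : ℝ) < 4 / N := div_pos four_pos (Nat.cast_pos.2 hN)
  obtain ⟨hQ_bound, hρ_bound⟩ := derivative_bounds_general hN hα hQ.1 hQ.2.1 hQ.2.2.1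
    hQ.tendsto_zero hQ.2.2.2.1 (ρ.smooth ⊤) hρrad
    (Metric.cobounded_eq_cocompact (α := EuclideanSpace ℝ (Fin N)) ▸ ρ.tendsto_cocompact) hρ
  exact ⟨fun n v ↦ hQ_bound n _, fun n v ↦ hρ_bound n _⟩
end
end
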